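/- Scale-invariant Hölder estimate for the Dirichlet Laplacian on a sector: Let 0 < β < 1/2 and 0 < α < 1. Let f : Ω̄_β → ℝ with 0 < ‖f‖_{∘C^α(Ω̄_β)} < ∞, and let Ψ be the unique function that is continuous on Ω̄_β, twice continuously differentiable on Ω_β, satisfies ∂_{x₁x₁}Ψ + ∂_{x₂x₂}Ψ = f on Ω_β, Ψ = 0 on ∂Ω_β, and |Ψ(x)| ≤ C|x|² ln(e+|x|) for some constant C. Then the Hessian ∇²Ψ satisfies, for constants C, c > 0 depending only on α and β: (i) ‖∇²Ψ‖_{L^∞(Ω_β)} ≤ C ‖f‖_{L^∞(Ω_β)} ( 1 + ln( 1 + c ‖f‖_{∘C^α(Ω̄_β)} / ‖f‖_{L^∞(Ω_β)} ) ); (ii) ‖∇²Ψ‖_{∘C^α(Ω̄_β)} ≤ C ‖f‖_{∘C^α(Ω̄_β)} (each entry of the Hessian obeying this bound). -/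

import Mathlib

open Set Complex
open scoped ENNReal NNReal Real

noncomputable section

/-- The open sector `Ω_β = { r e^{iθ} : r > 0, 0 < θ < βπ }` in `ℂ ≅ ℝ²`. -/
def Sector (β : ℝ) : Set ℂ := {z | z ≠ 0 ∧ 0 < Complex.arg z ∧ Complex.arg z < β * π}

/-- The Laplacian `ΔΨ = ∂_{x₁x₁}Ψ + ∂_{x₂x₂}Ψ` of a function `Ψ : ℂ → ℝ`. -/
def lap (Ψ : ℂ → ℝ) (z : ℂ) : ℝ :=
  fderiv ℝ (fun w => fderiv ℝ Ψ w 1) z 1 +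
    fderiv ℝ (fun w => fderiv ℝ Ψ w Complex.I) z Complex.I

/-- Second partial derivative of `Ψ` in the directions `v₁, v₂ ∈ {1, i}` (an entry of the
Hessian `∇²Ψ`). -/
def hess (Ψ : ℂ → ℝ) (v₁ v₂ : ℂ) (z : ℂ) : ℝ :=
  fderiv ℝ (fun w => fderiv ℝ Ψ w v₁) z v₂

/-- Sup-norm `‖f‖_{L^∞(D)}` of `f : ℂ → ℝ`, valued in `ℝ≥0∞`. -/
def supNormC (D : Set ℂ) (f : ℂ → ℝ) : ℝ≥0∞ := ⨆ z : D, (‖f (z : ℂ)‖₊ : ℝ≥0∞)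

/-- The scale-invariant Hölder norm `‖f‖_{∘C^α(D)}`, valued in `ℝ≥0∞`:
`sup_D |f| + sup_{z ≠ z'} | |z|^α f(z) - |z'|^α f(z') | / |z-z'|^α`. -/
def ringNormC (α : ℝ) (D : Set ℂ) (f : ℂ → ℝ) : ℝ≥0∞ :=
  supNormC D f +
    ⨆ p : {q : D × D // (q.1 : ℂ) ≠ (q.2 : ℂ)},
      (‖(‖(p.1.1 : ℂ)‖ ^ α) * f (p.1.1 : ℂ) - (‖(p.1.2 : ℂ)‖ ^ α) * f (p.1.2 : ℂ)‖₊ : ℝ≥0∞) /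
        ENNReal.ofReal (‖(p.1.1 : ℂ) - (p.1.2 : ℂ)‖ ^ α)

/-- The Hölder seminorm `sup_{z ≠ z'} |f(z) - f(z')| / |z-z'|^α`, valued in `ℝ≥0∞`. -/
def holderSemiC (α : ℝ) (D : Set ℂ) (f : ℂ → ℝ) : ℝ≥0∞ :=
  ⨆ p : {q : D × D // (q.1 : ℂ) ≠ (q.2 : ℂ)},
    (‖f (p.1.1 : ℂ) - f (p.1.2 : ℂ)‖₊ : ℝ≥0∞) /
      ENNReal.ofReal (‖(p.1.1 : ℂ) - (p.1.2 : ℂ)‖ ^ α)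

/-- The uniform Hölder norm `‖f‖_{C^α(D)} = sup_D |f| + Hölder seminorm`. -/
def unifNormC (α : ℝ) (D : Set ℂ) (f : ℂ → ℝ) : ℝ≥0∞ :=
  supNormC D f + holderSemiC α D f

/-!
The ball of radius comparable to `‖z‖` around a point `z` of the sector meets at most one of the two
edges, and reflecting the sector in its bisector makes it the real axis. Near the axis the solution
is compared in a half-disc, by the maximum principle, with the real part of an entire function that
is odd under conjugation: it vanishes on the axis, and on the circle it approximates the odd
extension of the solution. On the half-disc of radius `r / 2 ^ k` the right-hand side oscillates by
`O(2 ^ (-α k))`, and comparing the approximations at successive scales telescopes to the Hessian.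
With `M = sup |f|` and `N` the Hölder norm of `f`, only `|f| ≤ M` is of use above the scale
`(M / N) ^ (1 / α)`, and the sum over these scales is the logarithm in (i); below it the geometric
decay takes over, and the same geometric sum yields the Hölder bound (ii).

The quadratic bound on the solution that starts the iteration comes from the maximum principle with
an explicit quadratic barrier. Since `β < 1 / 2`, some `γ > 2` has `γ β < 1`, so the real part of a
rotated `z ^ γ` is a positive harmonic function that dominates the solution at infinity.
-/

section

open Metric Filter Topology Asymptotics
open scoped ComplexConjugate

/-! ### Second derivatives -/

section NormedSpace

variable {E F : Type*} [NormedAddCommGroup E] [NormedSpace ℝ E] [NormedAddCommGroup F]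
  [NormedSpace ℝ F] {u : E → F} {z : E}

lemma differentiableAt_fderiv_of_contDiffAt_two (hu : ContDiffAt ℝ 2 u z) :
    DifferentiableAt ℝ (fderiv ℝ u) z :=
  (hu.fderiv_right (m := 1) (by norm_num)).differentiableAt (by norm_num)

lemma differentiableAt_fderiv_apply (hu : ContDiffAt ℝ 2 u z) (a : E) :
    DifferentiableAt ℝ (fun w => fderiv ℝ u w a) z :=
  (differentiableAt_fderiv_of_contDiffAt_two hu).clm_apply (differentiableAt_const a)

lemma eventually_differentiableAt_of_contDiffAt_two (hu : ContDiffAt ℝ 2 u z) :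
    ∀ᶠ w in 𝓝 z, DifferentiableAt ℝ u w := by
  filter_upwards [hu.eventually (by simp)] with w hw
  exact hw.differentiableAt (by norm_num)

lemma sub_isLittleO_norm_sq_of_fderiv_isLittleO (hu : ∀ᶠ w in 𝓝 z, DifferentiableAt ℝ u w)
    (h : fderiv ℝ u =o[𝓝 z] fun w => w - z) :
    (fun w => u w - u z) =o[𝓝 z] fun w => ‖w - z‖ ^ 2 := by
  refine IsLittleO.of_bound fun ε hε => ?_
  obtain ⟨δ, hδ, hball⟩ := eventually_nhds_iff_ball.1 ((h.def hε).and hu)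
  filter_upwards [ball_mem_nhds z hδ] with w hw
  have hsegment : segment ℝ z w ⊆ ball z δ :=
    (convex_ball z δ).segment_subset (mem_ball_self hδ) hw
  have hfderiv : ∀ y ∈ segment ℝ z w, ‖fderiv ℝ u y‖ ≤ ε * ‖w - z‖ := fun y hy =>
    (hball y (hsegment hy)).1.trans <| by
      gcongr
      exact norm_sub_le_of_mem_segment hy
  calc ‖u w - u z‖ ≤ ε * ‖w - z‖ * ‖w - z‖ :=
        (convex_segment z w).norm_image_sub_le_of_norm_fderiv_le
          (fun y hy => (hball y (hsegment hy)).2) hfderiv (left_mem_segment ℝ z w)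
          (right_mem_segment ℝ z w)
    _ = ε * ‖‖w - z‖ ^ 2‖ := by rw [norm_pow, norm_norm]; ring

lemma taylor_two_isLittleO (hu : ContDiffAt ℝ 2 u z) :
    (fun w => u w - u z - fderiv ℝ u z (w - z) -
      (1 / 2 : ℝ) • fderiv ℝ (fderiv ℝ u) z (w - z) (w - z)) =o[𝓝 z] fun w => ‖w - z‖ ^ 2 := by
  set B := fderiv ℝ (fderiv ℝ u) z
  have hsymm : ∀ a b, B a b = B b a := fun a b => hu.isSymmSndFDerivAt (by simp) a b
  set φ : E → F := fun w => u w - fderiv ℝ u z (w - z) - (1 / 2 : ℝ) • B (w - z) (w - z)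
  have hsub : ∀ y : E, HasFDerivAt (fun w => w - z) (ContinuousLinearMap.id ℝ E) y := fun y =>
    (hasFDerivAt_id y).sub_const z
  have hφ : ∀ᶠ w in 𝓝 z,
      HasFDerivAt φ (fderiv ℝ u w - fderiv ℝ u z - B (w - z)) w := by
    filter_upwards [eventually_differentiableAt_of_contDiffAt_two hu] with w hw
    refine ((hw.hasFDerivAt.sub ((fderiv ℝ u z).hasFDerivAt.comp w (hsub w))).sub
      (((B.hasFDerivAt.comp w (hsub w)).clm_apply (hsub w)).const_smul (1 / 2 : ℝ))).congr_fderiv ?_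
    ext a
    have hBa : B a (w - z) = B (w - z) a := hsymm _ _
    simp [-map_sub, hBa, ← two_smul ℝ, smul_smul]
  have hφ' : fderiv ℝ φ =o[𝓝 z] fun w => w - z :=
    ((differentiableAt_fderiv_of_contDiffAt_two hu).hasFDerivAt.isLittleO).congr'
      (by filter_upwards [hφ] with w hw using hw.fderiv.symm) EventuallyEq.rfl
  refine (sub_isLittleO_norm_sq_of_fderiv_isLittleO (hφ.mono fun w hw => hw.differentiableAt)
    hφ').congr_left fun w => ?_
  simp [φ, sub_right_comm]

end NormedSpace

section Hessian

variable {u v : ℂ → ℝ} {z : ℂ}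

lemma hess_eq_fderiv_fderiv (hu : ContDiffAt ℝ 2 u z) (a b : ℂ) :
    hess u a b z = fderiv ℝ (fderiv ℝ u) z b a := by
  rw [hess, fderiv_clm_apply (differentiableAt_fderiv_of_contDiffAt_two hu)
    (differentiableAt_const a)]
  simp

lemma hess_congr (h : u =ᶠ[𝓝 z] v) (a b : ℂ) : hess u a b z = hess v a b z := by
  have hfderiv : (fun w => fderiv ℝ u w a) =ᶠ[𝓝 z] fun w => fderiv ℝ v w a :=
    h.fderiv.fun_comp (· a)
  rw [hess, hess, hfderiv.fderiv_eq]

lemma hess_symm (hu : ContDiffAt ℝ 2 u z) (a b : ℂ) : hess u a b z = hess u b a z := by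
  rw [hess_eq_fderiv_fderiv hu, hess_eq_fderiv_fderiv hu]
  exact hu.isSymmSndFDerivAt (by simp) b a

lemma hess_add (hu : ContDiffAt ℝ 2 u z) (hv : ContDiffAt ℝ 2 v z) (a b : ℂ) :
    hess (fun w => u w + v w) a b z = hess u a b z + hess v a b z := by
  have hfderiv : (fun w => fderiv ℝ (fun w => u w + v w) w a) =ᶠ[𝓝 z]
      fun w => fderiv ℝ u w a + fderiv ℝ v w a := by
    filter_upwards [eventually_differentiableAt_of_contDiffAt_two hu,
      eventually_differentiableAt_of_contDiffAt_two hv] with w hu hv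
    rw [fderiv_fun_add hu hv, add_apply]
  rw [hess, hfderiv.fderiv_eq, fderiv_fun_add (differentiableAt_fderiv_apply hu a)
    (differentiableAt_fderiv_apply hv a), add_apply, hess, hess]

lemma hess_const_mul (c : ℝ) (hu : ContDiffAt ℝ 2 u z) (a b : ℂ) :
    hess (fun w => c * u w) a b z = c * hess u a b z := by
  have hfderiv : (fun w => fderiv ℝ (fun w => c * u w) w a) =ᶠ[𝓝 z]
      fun w => c * fderiv ℝ u w a := by
    filter_upwards [eventually_differentiableAt_of_contDiffAt_two hu] with w hu
    rw [fderiv_const_mul hu, smul_apply, smul_eq_mul]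
  rw [hess, hfderiv.fderiv_eq, fderiv_const_mul (differentiableAt_fderiv_apply hu a),
    smul_apply, smul_eq_mul, hess]

lemma hess_sub (hu : ContDiffAt ℝ 2 u z) (hv : ContDiffAt ℝ 2 v z) (a b : ℂ) :
    hess (fun w => u w - v w) a b z = hess u a b z - hess v a b z := by
  have h := hess_add hu (contDiffAt_const.mul hv : ContDiffAt ℝ 2 (fun w => (-1) * v w) z) a b
  rw [hess_const_mul (-1) hv] at h
  simpa only [neg_one_mul, ← sub_eq_add_neg] using h

lemma hess_comp_continuousLinearEquiv (L : ℂ ≃L[ℝ] ℂ) (a b : ℂ) :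
    hess (fun w => u (L w)) a b z = hess u (L a) (L b) (L z) := by
  have hfderiv : (fun w => fderiv ℝ (fun w => u (L w)) w a) =
      (fun w => fderiv ℝ u w (L a)) ∘ L := by
    ext w
    exact DFunLike.congr_fun (L.comp_right_fderiv (f := u) (x := w)) a
  rw [hess, hfderiv, L.comp_right_fderiv]
  rfl

lemma hess_comp_sub_right (a b c : ℂ) :
    hess (fun w => u (w - c)) a b z = hess u a b (z - c) := by
  simp only [hess, fderiv_comp_sub]
  rw [fderiv_comp_sub (f := fun w => fderiv ℝ u w a)]

lemma hess_mul_continuousLinearMap (ℓ₁ ℓ₂ : ℂ →L[ℝ] ℝ) (a b z : ℂ) :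
    hess (fun w => ℓ₁ w * ℓ₂ w) a b z = ℓ₁ a * ℓ₂ b + ℓ₁ b * ℓ₂ a := by
  have hfderiv : (fun w => fderiv ℝ (fun w => ℓ₁ w * ℓ₂ w) w a) =
      fun w => (ℓ₂ a • ℓ₁ + ℓ₁ a • ℓ₂) w := by
    ext w
    rw [fderiv_fun_mul ℓ₁.differentiableAt ℓ₂.differentiableAt]
    simp [mul_comm, add_comm]
  rw [hess, hfderiv, ContinuousLinearMap.fderiv]
  simp [mul_comm, add_comm]

lemma lap_eq_hess (u : ℂ → ℝ) (z : ℂ) : lap u z = hess u 1 1 z + hess u I I z := rfl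

lemma lap_add (hu : ContDiffAt ℝ 2 u z) (hv : ContDiffAt ℝ 2 v z) :
    lap (fun w => u w + v w) z = lap u z + lap v z := by
  simp only [lap_eq_hess, hess_add hu hv]
  ring

lemma lap_const_mul (c : ℝ) (hu : ContDiffAt ℝ 2 u z) :
    lap (fun w => c * u w) z = c * lap u z := by
  simp only [lap_eq_hess, hess_const_mul c hu, mul_add]

lemma lap_sub (hu : ContDiffAt ℝ 2 u z) (hv : ContDiffAt ℝ 2 v z) :
    lap (fun w => u w - v w) z = lap u z - lap v z := by
  simp only [lap_eq_hess, hess_sub hu hv]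
  ring

lemma lap_neg (hu : ContDiffAt ℝ 2 u z) : lap (fun w => -u w) z = -lap u z := by
  simpa only [neg_one_mul] using lap_const_mul (-1) hu

lemma contDiff_im_sub_sq (d : ℝ) : ContDiff ℝ 2 fun w : ℂ => (w.im - d) ^ 2 :=
  (imCLM.contDiff.sub contDiff_const).pow 2

lemma hess_im_sub_sq (d : ℝ) (a b z : ℂ) :
    hess (fun w => (w.im - d) ^ 2) a b z = 2 * (a.im * b.im) := by
  have htrans : (fun w : ℂ => (w.im - d) ^ 2) = fun w => imCLM (w - d * I) * imCLM (w - d * I) := by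
    ext w
    simp [sq]
  rw [htrans, hess_comp_sub_right (u := fun w => imCLM w * imCLM w), hess_mul_continuousLinearMap]
  simp only [imCLM_apply]
  ring

lemma lap_im_sub_sq (d : ℝ) (z : ℂ) : lap (fun w => (w.im - d) ^ 2) z = 2 := by
  simp [lap_eq_hess, hess_im_sub_sq]

end Hessian

section Holomorphic

variable {G : ℂ → ℂ} {z : ℂ}

lemma contDiffAt_re (hG : AnalyticAt ℂ G z) : ContDiffAt ℝ 2 (fun w => (G w).re) z :=
  reCLM.contDiff.contDiffAt.comp z (hG.contDiffAt.restrict_scalars ℝ)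

lemma fderiv_re_apply (hG : DifferentiableAt ℂ G z) (a : ℂ) :
    fderiv ℝ (fun w => (G w).re) z a = (deriv G z * a).re := by
  have h := reCLM.hasFDerivAt.comp z (hG.hasDerivAt.hasFDerivAt.restrictScalars ℝ)
  rw [show fderiv ℝ (fun w => (G w).re) z = _ from h.fderiv]
  simp [mul_comm]

lemma hess_re (hG : AnalyticAt ℂ G z) (a b : ℂ) :
    hess (fun w => (G w).re) a b z = (iteratedDeriv 2 G z * a * b).re := by
  have hfderiv : (fun w => fderiv ℝ (fun w => (G w).re) w a) =ᶠ[𝓝 z]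
      fun w => (deriv G w * a).re := by
    filter_upwards [hG.eventually_analyticAt] with w hw
    exact fderiv_re_apply hw.differentiableAt a
  have hderiv : DifferentiableAt ℂ (deriv G) z := hG.deriv.differentiableAt
  rw [hess, hfderiv.fderiv_eq, fderiv_re_apply (hderiv.mul_const a), deriv_mul_const hderiv,
    iteratedDeriv_succ, iteratedDeriv_one]

lemma lap_re (hG : AnalyticAt ℂ G z) : lap (fun w => (G w).re) z = 0 := by
  rw [lap_eq_hess, hess_re hG, hess_re hG]
  simp [mul_assoc]

end Holomorphic

/-- The complex number `u_xx - i u_xy`. Together with `lap u` it encodes the Hessian, and it is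
`G''` when `u` is the real part of a holomorphic function `G`. -/
def complexHess (u : ℂ → ℝ) (z : ℂ) : ℂ := ⟨hess u 1 1 z, -hess u 1 I z⟩

section ComplexHess

variable {u v : ℂ → ℝ} {z z' : ℂ}

lemma hess_eq_complexHess (hu : ContDiffAt ℝ 2 u z) (a b : ℂ) :
    hess u a b z = lap u z * (a.im * b.im) + (complexHess u z * a * b).re := by
  have hbasis : ∀ c : ℂ, c = c.re • (1 : ℂ) + c.im • I := fun c => by simp
  have hI1 : hess u I 1 z = hess u 1 I z := hess_symm hu I 1
  have hexpand : hess u a b z = a.re * b.re * hess u 1 1 z +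
      (a.re * b.im + a.im * b.re) * hess u 1 I z + a.im * b.im * hess u I I z := by
    rw [hess_eq_fderiv_fderiv hu] at hI1 ⊢
    conv_lhs => rw [hbasis a, hbasis b]
    simp only [map_add, map_smul, add_apply, smul_apply, smul_eq_mul,
      ← hess_eq_fderiv_fderiv hu] at hI1 ⊢
    rw [hI1]
    ring
  rw [hexpand, lap_eq_hess]
  simp only [complexHess, mul_re, mul_im]
  ring

lemma complexHess_sub (hu : ContDiffAt ℝ 2 u z) (hv : ContDiffAt ℝ 2 v z) :
    complexHess (fun w => u w - v w) z = complexHess u z - complexHess v z := by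
  apply Complex.ext <;> simp only [complexHess, hess_sub hu hv, sub_re, sub_im]
  ring

lemma complexHess_re {G : ℂ → ℂ} (hG : AnalyticAt ℂ G z) :
    complexHess (fun w => (G w).re) z = iteratedDeriv 2 G z := by
  apply Complex.ext <;> simp [complexHess, hess_re hG]

lemma abs_mul_im_mul_im_add_re_le (l : ℝ) (h a b : ℂ) :
    |l * (a.im * b.im) + (h * a * b).re| ≤ (|l| + ‖h‖) * (‖a‖ * ‖b‖) := by
  have him : |a.im * b.im| ≤ ‖a‖ * ‖b‖ := by
    rw [abs_mul]
    exact mul_le_mul (abs_im_le_norm a) (abs_im_le_norm b) (abs_nonneg _) (norm_nonneg _)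
  calc |l * (a.im * b.im) + (h * a * b).re| ≤ |l| * |a.im * b.im| + ‖h * a * b‖ := by
        rw [← abs_mul]
        exact (abs_add_le _ _).trans (add_le_add_right (abs_re_le_norm _) _)
    _ ≤ |l| * (‖a‖ * ‖b‖) + ‖h‖ * (‖a‖ * ‖b‖) := by
        rw [norm_mul, norm_mul, mul_assoc ‖h‖]
        gcongr
    _ = (|l| + ‖h‖) * (‖a‖ * ‖b‖) := by ring

lemma abs_hess_le (hu : ContDiffAt ℝ 2 u z) (a b : ℂ) :
    |hess u a b z| ≤ (|lap u z| + ‖complexHess u z‖) * (‖a‖ * ‖b‖) := by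
  rw [hess_eq_complexHess hu]
  exact abs_mul_im_mul_im_add_re_le _ _ _ _

lemma abs_hess_sub_le (hu : ContDiffAt ℝ 2 u z) (hu' : ContDiffAt ℝ 2 u z') (a b : ℂ) :
    |hess u a b z - hess u a b z'| ≤
      (|lap u z - lap u z'| + ‖complexHess u z - complexHess u z'‖) * (‖a‖ * ‖b‖) := by
  convert abs_mul_im_mul_im_add_re_le (lap u z - lap u z') (complexHess u z - complexHess u z')
    a b using 2
  rw [hess_eq_complexHess hu, hess_eq_complexHess hu', sub_mul, sub_mul, sub_mul, sub_re]
  ring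

lemma lap_comp_linearIsometryEquiv (L : ℂ ≃ₗᵢ[ℝ] ℂ) (hu : ContDiffAt ℝ 2 u (L z)) :
    lap (fun w => u (L w)) z = lap u (L z) := by
  have hL : L I = I * L 1 ∨ L I = -I * L 1 := by
    rcases linear_isometry_complex L with ⟨a, rfl | rfl⟩ <;> simp [mul_comm]
  have hsq : (L 1).re * (L 1).re + (L 1).im * (L 1).im = 1 := by
    rw [← normSq_apply, normSq_eq_norm_sq, L.norm_map, norm_one, one_pow]
  have hhess : ∀ a, hess (fun w => u (L w)) a a z = hess u (L a) (L a) (L z) := fun a =>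
    hess_comp_continuousLinearEquiv L.toContinuousLinearEquiv a a
  rw [lap_eq_hess, hhess, hhess, hess_eq_complexHess hu, hess_eq_complexHess hu]
  rcases hL with hL | hL <;>
  · simp only [hL, mul_re, mul_im, I_re, I_im, neg_re, neg_im]
    linear_combination lap u (L z) * hsq

end ComplexHess

/-! ### The maximum principle -/

lemma fderiv_fderiv_apply_nonpos_of_isLocalMax {E : Type*} [NormedAddCommGroup E]
    [NormedSpace ℝ E] {v : E → ℝ} {z : E} (hmax : IsLocalMax v z) (hv : ContDiffAt ℝ 2 v z)
    (a : E) : fderiv ℝ (fderiv ℝ v) z a a ≤ 0 := by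
  have hline : Tendsto (fun t : ℝ => z + t • a) (𝓝[≠] 0) (𝓝 z) := by
    have : ContinuousAt (fun t : ℝ => z + t • a) 0 := by fun_prop
    simpa [ContinuousAt] using this.tendsto.mono_left nhdsWithin_le_nhds
  have hsq : (fun t : ℝ => ‖z + t • a - z‖ ^ 2) =O[𝓝[≠] 0] fun t => t ^ 2 :=
    IsBigO.of_bound (‖a‖ ^ 2) (.of_forall fun t => by simp [norm_smul, mul_pow, mul_comm])
  have htaylor := (((taylor_two_isLittleO hv).comp_tendsto hline).trans_isBigO
    hsq).tendsto_div_nhds_zero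
  have hlim : Tendsto (fun t : ℝ => (v (z + t • a) - v z) / t ^ 2) (𝓝[≠] 0)
      (𝓝 (1 / 2 * fderiv ℝ (fderiv ℝ v) z a a)) := by
    refine (zero_add (1 / 2 * fderiv ℝ (fderiv ℝ v) z a a) ▸ htaylor.add_const _).congr' ?_
    filter_upwards [self_mem_nhdsWithin] with t ht
    have ht : t ≠ 0 := ht
    simp only [Function.comp_apply, hmax.fderiv_eq_zero, add_sub_cancel_left, map_smul, smul_apply,
      smul_eq_mul, zero_apply, sub_zero]
    field_simp
    ring
  have hnonpos := le_of_tendsto hlim <| by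
    filter_upwards [hline.eventually hmax] with t ht
    exact div_nonpos_of_nonpos_of_nonneg (sub_nonpos.2 ht) (sq_nonneg t)
  linarith

section MaximumPrinciple

variable {V : Set ℂ} {v : ℂ → ℝ} {m : ℝ} {z : ℂ}

lemma le_of_lap_pos (hV : IsOpen V) (hVb : Bornology.IsBounded V)
    (hv : ContinuousOn v (closure V)) (hv2 : ContDiffOn ℝ 2 v V) (hlap : ∀ w ∈ V, 0 < lap v w)
    (hm : ∀ w ∈ frontier V, v w ≤ m) (hz : z ∈ closure V) : v z ≤ m := by
  obtain ⟨x, hx, hmax⟩ := hVb.isCompact_closure.exists_isMaxOn ⟨z, hz⟩ hv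
  refine (hmax hz).trans (hm x ⟨hx, fun hxV => ?_⟩)
  rw [hV.interior_eq] at hxV
  have hv2 := hv2.contDiffAt (hV.mem_nhds hxV)
  have hloc : IsLocalMax v x := hmax.isLocalMax (mem_of_superset (hV.mem_nhds hxV) subset_closure)
  have hnonpos : ∀ a, hess v a a x ≤ 0 := fun a => by
    rw [hess_eq_fderiv_fderiv hv2]
    exact fderiv_fderiv_apply_nonpos_of_isLocalMax hloc hv2 a
  have hpos := hlap x hxV
  rw [lap_eq_hess] at hpos
  linarith [hnonpos 1, hnonpos I]

variable {c : ℂ} {ρ η : ℝ}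

lemma le_of_neg_le_lap (hV : IsOpen V) (hVb : V ⊆ ball c ρ) (hv : ContinuousOn v (closure V))
    (hv2 : ContDiffOn ℝ 2 v V) (hη : 0 ≤ η) (hlap : ∀ w ∈ V, -η ≤ lap v w)
    (hm : ∀ w ∈ frontier V, v w ≤ m) (hz : z ∈ closure V) : v z ≤ m + η * ρ ^ 2 / 2 := by
  have hq_le : ∀ w ∈ frontier V, (w.im - c.im) ^ 2 ≤ ρ ^ 2 := fun w hw => by
    have hw : w ∈ closedBall c ρ :=
      closure_ball_subset_closedBall (closure_mono hVb (frontier_subset_closure hw))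
    rw [← sq_abs, ← sub_im]
    exact pow_le_pow_left₀ (abs_nonneg _)
      ((abs_im_le_norm _).trans (mem_closedBall_iff_norm.1 hw)) 2
  have hperturb : ∀ δ > 0, v z ≤ m + (η / 2 + δ) * ρ ^ 2 := fun δ hδ => by
    have hq : ContDiff ℝ 2 fun w : ℂ => (η / 2 + δ) * (w.im - c.im) ^ 2 :=
      contDiff_const.mul (contDiff_im_sub_sq c.im)
    refine (le_add_of_nonneg_right (by positivity)).trans
      (le_of_lap_pos (v := fun w => v w + (η / 2 + δ) * (w.im - c.im) ^ 2) hV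
        (isBounded_ball.subset hVb) (hv.add hq.continuous.continuousOn) (hv2.add hq.contDiffOn)
        (fun w hw => ?_) (fun w hw => ?_) hz)
    · rw [lap_add (hv2.contDiffAt (hV.mem_nhds hw)) hq.contDiffAt,
        lap_const_mul _ (contDiff_im_sub_sq c.im).contDiffAt, lap_im_sub_sq]
      linarith [hlap w hw]
    · linarith [hm w hw, mul_le_mul_of_nonneg_left (hq_le w hw) (by positivity : 0 ≤ η / 2 + δ)]
  have hlim : Tendsto (fun δ : ℝ => m + (η / 2 + δ) * ρ ^ 2) (𝓝[>] 0)
      (𝓝 (m + η * ρ ^ 2 / 2)) := by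
    have hcont : ContinuousAt (fun δ : ℝ => m + (η / 2 + δ) * ρ ^ 2) 0 := by fun_prop
    convert hcont.tendsto.mono_left nhdsWithin_le_nhds using 2
    ring
  exact ge_of_tendsto hlim (eventually_mem_nhdsWithin.mono hperturb)

lemma abs_le_of_abs_lap_le (hV : IsOpen V) (hVb : V ⊆ ball c ρ) (hv : ContinuousOn v (closure V))
    (hv2 : ContDiffOn ℝ 2 v V) (hη : 0 ≤ η) (hlap : ∀ w ∈ V, |lap v w| ≤ η)
    (hm : ∀ w ∈ frontier V, |v w| ≤ m) (hz : z ∈ closure V) : |v z| ≤ m + η * ρ ^ 2 / 2 := by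
  refine abs_le'.2 ⟨le_of_neg_le_lap hV hVb hv hv2 hη (fun w hw => neg_le_of_abs_le (hlap w hw))
    (fun w hw => le_of_abs_le (hm w hw)) hz, le_of_neg_le_lap (v := fun w => -v w) hV hVb hv.neg
    hv2.neg hη (fun w hw => ?_) (fun w hw => neg_le.1 (neg_le_of_abs_le (hm w hw))) hz⟩
  rw [lap_neg (hv2.contDiffAt (hV.mem_nhds hw))]
  exact neg_le_neg (le_of_abs_le (hlap w hw))

lemma nonpos_of_lap_nonneg_of_eventually_le {S : Set ℂ} {g : ℂ → ℝ} (hS : IsOpen S)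
    (hv : ContinuousOn v (closure S)) (hv2 : ContDiffOn ℝ 2 v S) (hlap : ∀ w ∈ S, 0 ≤ lap v w)
    (hfrontier : ∀ w ∈ frontier S, v w ≤ 0)
    (hg : ContinuousOn g (closure S)) (hg2 : ContDiffOn ℝ 2 g S) (hlapg : ∀ w ∈ S, lap g w ≤ 0)
    (hg0 : ∀ w ∈ frontier S, 0 ≤ g w)
    (hgrowth : ∀ δ > 0, ∀ᶠ w in Bornology.cobounded ℂ ⊓ 𝓟 S, v w ≤ δ * g w) (hz : z ∈ S) :
    v z ≤ 0 := by
  have hle : ∀ δ > 0, v z ≤ δ * g z := by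
    intro δ hδ
    obtain ⟨R, -, hR⟩ := ((hasBasis_cobounded_norm (E := ℂ)).inf_principal S).eventually_iff.1
      (hgrowth δ hδ)
    set V := S ∩ ball 0 (max R (‖z‖ + 1))
    have hVS : V ⊆ S := inter_subset_left
    have hV : IsOpen V := hS.inter isOpen_ball
    have hzV : z ∈ V := ⟨hz, by simp⟩
    have hδg2 : ContDiffOn ℝ 2 (fun w => δ * g w) S := contDiffOn_const.mul hg2
    refine sub_nonpos.1 ((le_of_neg_le_lap (v := fun w => v w - δ * g w) (m := 0) (η := 0) hV
      inter_subset_right ((hv.sub (continuousOn_const.mul hg)).mono (closure_mono hVS))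
      ((hv2.sub hδg2).mono hVS) le_rfl (fun w hw => ?_) (fun w hw => ?_)
      (subset_closure hzV)).trans_eq (by simp))
    · have hSw := hS.mem_nhds hw.1
      rw [lap_sub (hv2.contDiffAt hSw) (hδg2.contDiffAt hSw), lap_const_mul δ (hg2.contDiffAt hSw)]
      nlinarith [hlap w hw.1, hlapg w hw.1]
    · rw [sub_nonpos]
      by_cases hwS : w ∈ S
      · have hwV : w ∉ V := fun hwV => hV.inter_frontier_eq.subset ⟨hwV, hw⟩
        have hnorm : max R (‖z‖ + 1) ≤ ‖w‖ := by simpa [V, hwS] using hwV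
        exact hR ⟨le_of_max_le_left hnorm, hwS⟩
      · have hw : w ∈ frontier S := by
          rw [hS.frontier_eq]
          exact ⟨closure_mono hVS (frontier_subset_closure hw), hwS⟩
        exact (hfrontier w hw).trans (mul_nonneg hδ.le (hg0 w hw))
  have hlim : Tendsto (fun δ : ℝ => δ * g z) (𝓝[>] 0) (𝓝 0) := by
    have : ContinuousAt (fun δ : ℝ => δ * g z) 0 := by fun_prop
    simpa [ContinuousAt] using this.tendsto.mono_left nhdsWithin_le_nhds
  exact ge_of_tendsto hlim (eventually_mem_nhdsWithin.mono hle)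

end MaximumPrinciple

/-! ### Real parts of holomorphic functions -/

lemma norm_sub_le_of_abs_re_le {F : ℂ → ℂ} {z w : ℂ} {s A : ℝ}
    (hF : DifferentiableOn ℂ F (ball z s)) (hA : ∀ w ∈ ball z s, |(F w).re| ≤ A) (hs : 0 < s)
    (hw : w ∈ closedBall z (s / 2)) : ‖F w - F z‖ ≤ 4 * A := by
  have hA0 : 0 ≤ A := (abs_nonneg _).trans (hA z (mem_ball_self hs))
  have hws : ‖w - z‖ ≤ s / 2 := mem_closedBall_iff_norm.1 hw
  have hmaps : MapsTo (fun x => z + x) (ball 0 s) (ball z s) := fun x hx => by simpa using hx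
  refine le_of_forall_pos_le_add fun δ hδ => ?_
  have hre : MapsTo (fun x => F (z + x) - F z) (ball 0 s) {y | y.re ≤ 2 * A + δ / 2} :=
    fun x hx => by
      have hx := le_of_abs_le (hA _ (hmaps hx))
      have hz := neg_le_of_abs_le (hA z (mem_ball_self hs))
      rw [mem_ofPred_eq, sub_re]
      linarith
  have hbound := borelCaratheodory_zero (by positivity)
    ((hF.comp (by fun_prop) hmaps).sub_const (F z)) hre hs (z := w - z) (by simp; linarith)
    (by simp)
  rw [Function.comp_apply, add_sub_cancel] at hbound
  refine hbound.trans ((div_le_iff₀ (by linarith)).2 ?_)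
  nlinarith

lemma norm_iteratedDeriv_le_of_abs_re_le {F : ℂ → ℂ} {z w : ℂ} {s A : ℝ} {n : ℕ}
    (hF : DifferentiableOn ℂ F (ball z s)) (hA : ∀ w ∈ ball z s, |(F w).re| ≤ A) (hn : n ≠ 0)
    (hs : 0 < s) (hw : w ∈ closedBall z (s / 4)) :
    ‖iteratedDeriv n F w‖ ≤ n.factorial * (4 * A) / (s / 4) ^ n := by
  have hsub : closedBall w (s / 4) ⊆ closedBall z (s / 2) :=
    closedBall_subset_closedBall' (by linarith [mem_closedBall.1 hw])
  have hsub' : closedBall z (s / 2) ⊆ ball z s := closedBall_subset_ball (by linarith)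
  have hFw : ContDiffAt ℂ n F w :=
    (hF.analyticAt (isOpen_ball.mem_nhds (hsub' (hsub (mem_closedBall_self (by positivity)))))
      ).contDiffAt
  have hcauchy := norm_iteratedDeriv_le_of_forall_mem_sphere_norm_le
    (f := fun y => F y - F z) (c := w) n (by positivity : 0 < s / 4)
    (((hF.mono hsub').mono hsub).sub_const _ |>.diffContOnCl_ball subset_rfl) fun y hy =>
      norm_sub_le_of_abs_re_le hF hA hs (hsub (sphere_subset_closedBall hy))
  rwa [iteratedDeriv_fun_sub hFw contDiffAt_const, iteratedDeriv_const, if_neg hn, sub_zero]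
    at hcauchy

lemma exists_entire_add_conj_of_mem_span_fourier {p : C(UnitAddCircle, ℂ)}
    (hp : p ∈ Submodule.span ℂ (range (@fourier 1))) :
    ∃ P Q : ℂ → ℂ, Differentiable ℂ P ∧ Differentiable ℂ Q ∧
      ∀ x, p x = P x.toCircle + conj (Q x.toCircle) := by
  induction hp using Submodule.span_induction with
  | mem p hp =>
    obtain ⟨n, rfl⟩ := hp
    obtain ⟨k, rfl | rfl⟩ := n.eq_nat_or_neg
    · exact ⟨fun w => w ^ k, 0, by fun_prop, by fun_prop, fun x => by
        simp [fourier_apply, AddCircle.toCircle_nsmul]⟩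
    · exact ⟨0, fun w => w ^ k, by fun_prop, by fun_prop, fun x => by
        simp [fourier_apply, AddCircle.toCircle_neg, AddCircle.toCircle_nsmul, ← inv_pow,
          -Circle.coe_inv, Circle.coe_inv_eq_conj]⟩
  | zero => exact ⟨0, 0, by fun_prop, by fun_prop, by simp⟩
  | add p q _ _ hp hq =>
    obtain ⟨P, Q, hP, hQ, hpPQ⟩ := hp
    obtain ⟨P', Q', hP', hQ', hqPQ⟩ := hq
    exact ⟨P + P', Q + Q', hP.add hP', hQ.add hQ', fun x => by
      simp only [ContinuousMap.add_apply, Pi.add_apply, map_add, hpPQ, hqPQ]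
      ring⟩
  | smul c p _ hp =>
    obtain ⟨P, Q, hP, hQ, hpPQ⟩ := hp
    exact ⟨fun w => c * P w, fun w => conj c * Q w, hP.const_mul c, hQ.const_mul _, fun x => by
      simp [hpPQ, mul_add]⟩

lemma exists_toCircle_eq {w : ℂ} (hw : ‖w‖ = 1) : ∃ x : UnitAddCircle, (x.toCircle : ℂ) = w := by
  obtain ⟨x, hx⟩ := (AddCircle.homeomorphCircle (T := 1) one_ne_zero).surjective
    ⟨w, mem_sphere_zero_iff_norm.2 hw⟩
  rw [AddCircle.homeomorphCircle_apply] at hx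
  exact ⟨x, congrArg Subtype.val hx⟩

lemma exists_entire_abs_sub_re_le_on_unitSphere {g : ℂ → ℝ} (hg : ContinuousOn g (sphere 0 1))
    {ε : ℝ} (hε : 0 < ε) :
    ∃ P : ℂ → ℂ, Differentiable ℂ P ∧ ∀ w ∈ sphere (0 : ℂ) 1, |g w - (P w).re| ≤ ε := by
  let gCircle : C(UnitAddCircle, ℂ) := ⟨fun x => g x.toCircle, continuous_ofReal.comp
    (hg.comp_continuous (by fun_prop) fun x => mem_sphere_zero_iff_norm.2 (Circle.norm_coe _))⟩
  have hclosure : gCircle ∈ (Submodule.span ℂ (range (@fourier 1))).topologicalClosure :=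
    span_fourier_closure_eq_top (T := 1) ▸ Submodule.mem_top
  obtain ⟨p, hp, hdist⟩ := Metric.mem_closure_iff.1 hclosure ε hε
  obtain ⟨P, Q, hP, hQ, hPQ⟩ := exists_entire_add_conj_of_mem_span_fourier hp
  refine ⟨P + Q, hP.add hQ, fun w hw => ?_⟩
  obtain ⟨x, rfl⟩ := exists_toCircle_eq (mem_sphere_zero_iff_norm.1 hw)
  calc |g x.toCircle - ((P + Q) x.toCircle).re| = |(gCircle x - p x).re| := by
        simp [gCircle, hPQ]
    _ ≤ ‖gCircle x - p x‖ := abs_re_le_norm _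
    _ ≤ ε := dist_eq_norm (gCircle x) (p x) ▸
        (ContinuousMap.dist_apply_le_dist x).trans hdist.le

lemma exists_entire_abs_sub_re_le_on_sphere {a : ℂ} {ρ : ℝ} (hρ : 0 < ρ) {g : ℂ → ℝ}
    (hg : ContinuousOn g (sphere a ρ)) {ε : ℝ} (hε : 0 < ε) :
    ∃ P : ℂ → ℂ, Differentiable ℂ P ∧ ∀ w ∈ sphere a ρ, |g w - (P w).re| ≤ ε := by
  have hmaps : MapsTo (fun w => a + ρ * w) (sphere 0 1) (sphere a ρ) := fun w hw => by
    simp_all [abs_of_pos hρ]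
  obtain ⟨P, hP, hgP⟩ := exists_entire_abs_sub_re_le_on_unitSphere
    (hg.comp (by fun_prop) hmaps) hε
  refine ⟨fun w => P ((w - a) / ρ), by fun_prop, fun w hw => ?_⟩
  have hρ' : (ρ : ℂ) ≠ 0 := ofReal_ne_zero.2 hρ.ne'
  convert hgP ((w - a) / ρ) ?_ using 3
  · rw [Function.comp_apply, mul_div_cancel₀ _ hρ', add_sub_cancel]
  · rw [mem_sphere_zero_iff_norm, norm_div, norm_real, Real.norm_of_nonneg hρ.le,
      div_eq_one_iff_eq hρ.ne', mem_sphere_iff_norm.1 hw]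

/-! ### Approximation by real parts of entire functions -/

section Approximation

variable {v : ℂ → ℝ} {ρ η ε : ℝ}

lemma exists_entire_abs_sub_re_le_on_closedBall {c : ℂ} (hv : ContinuousOn v (closedBall c ρ))
    (hv2 : ContDiffOn ℝ 2 v (ball c ρ)) (hlap : ∀ w ∈ ball c ρ, |lap v w| ≤ η) (hρ : 0 < ρ)
    (hε : 0 < ε) :
    ∃ P : ℂ → ℂ, Differentiable ℂ P ∧
      ∀ w ∈ closedBall c ρ, |v w - (P w).re| ≤ ε + η * ρ ^ 2 / 2 := by
  have hη : 0 ≤ η := (abs_nonneg _).trans (hlap c (mem_ball_self hρ))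
  obtain ⟨P, hP, hvP⟩ :=
    exists_entire_abs_sub_re_le_on_sphere hρ (hv.mono sphere_subset_closedBall) hε
  have hPre : ∀ w, ContDiffAt ℝ 2 (fun w => (P w).re) w := fun w => contDiffAt_re (hP.analyticAt w)
  refine ⟨P, hP, fun w hw => ?_⟩
  rw [← closure_ball c hρ.ne'] at hw hv
  refine abs_le_of_abs_lap_le (v := fun w => v w - (P w).re) isOpen_ball subset_rfl
    (hv.sub (continuous_re.comp hP.continuous).continuousOn)
    (hv2.sub fun y _ => (hPre y).contDiffWithinAt) hη (fun y hy => ?_)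
    (fun y hy => hvP y (frontier_ball_subset_sphere hy)) hw
  rw [lap_sub (hv2.contDiffAt (isOpen_ball.mem_nhds hy)) (hPre y), lap_re (hP.analyticAt y),
    sub_zero]
  exact hlap y hy

/-- The extension of a function on the upper half-plane which is odd under conjugation. -/
def oddExtension (v : ℂ → ℝ) (w : ℂ) : ℝ := if 0 ≤ w.im then v w else -v (conj w)

lemma oddExtension_of_im_nonneg {w : ℂ} (hw : 0 ≤ w.im) : oddExtension v w = v w := if_pos hw

lemma oddExtension_conj {w : ℂ} (hw : 0 < w.im) : oddExtension v (conj w) = -v w := by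
  rw [oddExtension, if_neg (by simpa using hw), conj_conj]

lemma continuousOn_oddExtension {S : Set ℂ} (hS : ∀ w ∈ S, conj w ∈ S)
    (hv : ContinuousOn v (S ∩ {w | 0 ≤ w.im})) (hzero : ∀ w ∈ S, w.im = 0 → v w = 0) :
    ContinuousOn (oddExtension v) S := by
  refine ContinuousOn.if (fun w hw => ?_) ?_ ?_
  · have him : w.im = 0 := by
      simpa only [frontier_setOfPred_le_im, mem_ofPred_eq] using hw.2
    rw [hzero w hw.1 him, conj_eq_iff_im.2 him, hzero w hw.1 him, neg_zero]
  · rwa [(isClosed_le continuous_const continuous_im).closure_eq]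
  · simp only [not_le, closure_setOfPred_im_lt]
    refine (hv.comp (by fun_prop) fun w hw => ⟨hS w hw.1, ?_⟩).neg
    simpa using hw.2

/-- The entire function whose real part is the odd part of `Re P` under conjugation. -/
def conjOddPart (P : ℂ → ℂ) (w : ℂ) : ℂ := (P w - conj (P (conj w))) / 2

lemma conjOddPart_re (P : ℂ → ℂ) (w : ℂ) :
    (conjOddPart P w).re = ((P w).re - (P (conj w)).re) / 2 := by
  simp [conjOddPart]

lemma differentiable_conjOddPart {P : ℂ → ℂ} (hP : Differentiable ℂ P) :
    Differentiable ℂ (conjOddPart P) :=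
  (hP.sub fun w => by simpa [Function.comp_def] using DifferentiableAt.conj_conj (hP (conj w))
    ).div_const 2

lemma abs_sub_conjOddPart_re_le {P : ℂ → ℂ} {w : ℂ} {a : ℝ} (hw : |a - (P w).re| ≤ ε)
    (hw' : |-a - (P (conj w)).re| ≤ ε) : |a - (conjOddPart P w).re| ≤ ε := by
  rw [conjOddPart_re]
  rw [abs_le] at *
  constructor <;> linarith

/-- The part of the disc `ball z r` in the open upper half-plane. -/
def halfDisc (z : ℂ) (r : ℝ) : Set ℂ := ball z r ∩ {w | 0 < w.im}

lemma isOpen_halfDisc (z : ℂ) (r : ℝ) : IsOpen (halfDisc z r) :=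
  isOpen_ball.inter (isOpen_lt continuous_const continuous_im)

lemma closure_halfDisc_subset (z : ℂ) (r : ℝ) :
    closure (halfDisc z r) ⊆ closedBall z r ∩ {w | 0 ≤ w.im} :=
  closure_minimal (inter_subset_inter ball_subset_closedBall fun _ hw => le_of_lt hw.out)
    (isClosed_closedBall.inter (isClosed_le continuous_const continuous_im))

lemma conj_mem_closedBall_ofReal {c : ℝ} {w : ℂ} (hw : w ∈ closedBall (c : ℂ) ρ) :
    conj w ∈ closedBall (c : ℂ) ρ := by
  rwa [mem_closedBall_iff_norm, ← conj_ofReal, ← map_sub, norm_conj, ← mem_closedBall_iff_norm]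

lemma exists_entire_odd_abs_sub_re_le_on_halfDisc {c : ℝ}
    (hv : ContinuousOn v (closedBall (c : ℂ) ρ ∩ {w | 0 ≤ w.im}))
    (hv2 : ContDiffOn ℝ 2 v (halfDisc c ρ)) (hlap : ∀ w ∈ halfDisc c ρ, |lap v w| ≤ η)
    (hzero : ∀ w ∈ closedBall (c : ℂ) ρ, w.im = 0 → v w = 0) (hρ : 0 < ρ) (hη : 0 ≤ η)
    (hε : 0 < ε) :
    ∃ Q : ℂ → ℂ, Differentiable ℂ Q ∧ (∀ w, (Q (conj w)).re = -(Q w).re) ∧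
      ∀ w ∈ halfDisc c ρ, |v w - (Q w).re| ≤ ε + η * ρ ^ 2 / 2 := by
  obtain ⟨P, hP, hvP⟩ := exists_entire_abs_sub_re_le_on_sphere hρ
    ((continuousOn_oddExtension (fun w => conj_mem_closedBall_ofReal) hv hzero).mono
      sphere_subset_closedBall) hε
  set Q := conjOddPart P
  have hQ : Differentiable ℂ Q := differentiable_conjOddPart hP
  have hodd : ∀ w, (Q (conj w)).re = -(Q w).re := fun w => by
    simp only [Q, conjOddPart_re, conj_conj]
    ring
  have hQre : ∀ w, ContDiffAt ℝ 2 (fun w => (Q w).re) w := fun w => contDiffAt_re (hQ.analyticAt w)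
  refine ⟨Q, hQ, hodd, fun w hw => abs_le_of_abs_lap_le (v := fun w => v w - (Q w).re)
    (isOpen_halfDisc c ρ) inter_subset_left
    ((hv.mono (closure_halfDisc_subset c ρ)).sub (continuous_re.comp hQ.continuous).continuousOn)
    (hv2.sub fun y _ => (hQre y).contDiffWithinAt) hη (fun y hy => ?_) (fun y hy => ?_)
    (subset_closure hw)⟩
  · rw [lap_sub (hv2.contDiffAt ((isOpen_halfDisc c ρ).mem_nhds hy)) (hQre y),
      lap_re (hQ.analyticAt y), sub_zero]
    exact hlap y hy
  · obtain ⟨hyρ, hy0⟩ := closure_halfDisc_subset c ρ (frontier_subset_closure hy)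
    rcases hy0.out.eq_or_lt with hy0 | hy0
    · have hQy : (Q y).re = 0 := by
        linarith [conj_eq_iff_im.2 hy0.symm ▸ hodd y]
      rw [hzero y hyρ hy0.symm, hQy]
      simpa using hε.le
    · have hy_sphere : ∀ y' : ℂ, dist y' (c : ℂ) = dist y (c : ℂ) → y' ∈ sphere (c : ℂ) ρ :=
        fun y' hy' => hy'.trans <| hyρ.out.antisymm <| not_lt.1 fun hlt =>
          (isOpen_halfDisc c ρ).inter_frontier_eq.subset ⟨⟨hlt, hy0⟩, hy⟩
      have hconj : dist (conj y) (c : ℂ) = dist y (c : ℂ) := by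
        rw [← conj_ofReal, dist_conj_conj]
        simp
      exact abs_sub_conjOddPart_re_le
        (oddExtension_of_im_nonneg (v := v) hy0.le ▸ hvP y (hy_sphere y rfl))
        (oddExtension_conj (v := v) hy0 ▸ hvP _ (hy_sphere _ hconj))

end Approximation

/-! ### The Dirichlet problem in half-discs -/

section HalfDisc

variable {u v f g : ℂ → ℝ} {F G : ℂ → ℂ} {z w : ℂ} {r η A : ℝ}

lemma halfDisc_subset_halfDisc {z' : ℂ} {r' : ℝ} (h : r' + dist z' z ≤ r) :
    halfDisc z' r' ⊆ halfDisc z r :=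
  inter_subset_inter_left _ (ball_subset_ball' h)

lemma mem_halfDisc_self (hz : 0 < z.im) (hr : 0 < r) : z ∈ halfDisc z r :=
  ⟨mem_ball_self hr, hz⟩

lemma abs_im_sub_im_lt_of_mem_ball (hw : w ∈ ball z r) : |w.im - z.im| < r := by
  rw [← sub_im]
  exact (abs_im_le_norm _).trans_lt (mem_ball_iff_norm.1 hw)

lemma dist_conj_le (hz : 0 ≤ z.im) (hw : w.im ≤ 0) : dist (conj w) z ≤ dist w z := by
  simp only [dist_eq_re_im, conj_re, conj_im]
  refine Real.sqrt_le_sqrt ?_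
  nlinarith [mul_nonneg hz (neg_nonneg.2 hw)]

/-- A condition under which `Re F` is controlled on the whole of `ball z r` by its values in the
upper half-plane: either the disc does not cross the real axis, or `Re F` is odd under
conjugation. -/
def OddAcrossReal (F : ℂ → ℂ) (z : ℂ) (r : ℝ) : Prop :=
  r ≤ z.im ∨ ∀ w, (F (conj w)).re = -(F w).re

namespace OddAcrossReal

lemma mono {r' : ℝ} (h : OddAcrossReal F z r) (hr : r' ≤ r) : OddAcrossReal F z r' :=
  h.imp_left hr.trans

lemma sub (hF : OddAcrossReal F z r) (hG : OddAcrossReal G z r) :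
    OddAcrossReal (fun w => F w - G w) z r := by
  rcases hF with hz | hF
  · exact .inl hz
  · refine hG.imp_right fun hG w => ?_
    rw [sub_re, sub_re, hF, hG]
    ring

lemma re_eq_zero (h : OddAcrossReal F z r) (hw : w ∈ ball z r) (hw0 : w.im = 0) :
    (F w).re = 0 := by
  rcases h with hz | h
  · have := abs_lt.1 (abs_im_sub_im_lt_of_mem_ball hw)
    linarith
  · linarith [conj_eq_iff_im.2 hw0 ▸ h w]

lemma abs_re_le (h : OddAcrossReal F z r) (hz : 0 < z.im)
    (hA : ∀ w ∈ halfDisc z r, |(F w).re| ≤ A) (hw : w ∈ ball z r) : |(F w).re| ≤ A := by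
  rcases lt_trichotomy w.im 0 with hw0 | hw0 | hw0
  · have hconj := hA (conj w)
      ⟨(dist_conj_le hz.le hw0.le).trans_lt hw, show 0 < (conj w).im by simpa using hw0⟩
    rcases h with hzr | h
    · have := abs_lt.1 (abs_im_sub_im_lt_of_mem_ball hw)
      linarith
    · rwa [h, abs_neg] at hconj
  · rw [h.re_eq_zero hw hw0, abs_zero]
    exact (abs_nonneg _).trans (hA z (mem_halfDisc_self hz (dist_nonneg.trans_lt hw)))
  · exact hA w ⟨hw, hw0⟩

lemma norm_iteratedDeriv_le (h : OddAcrossReal F z r) (hF : Differentiable ℂ F) (hz : 0 < z.im)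
    (hA : ∀ w ∈ halfDisc z r, |(F w).re| ≤ A) (hr : 0 < r) {n : ℕ} (hn : n ≠ 0)
    (hw : w ∈ closedBall z (r / 4)) : ‖iteratedDeriv n F w‖ ≤ n.factorial * (4 * A) / (r / 4) ^ n :=
  norm_iteratedDeriv_le_of_abs_re_le hF.differentiableOn (fun _ hw => h.abs_re_le hz hA hw) hn hr hw

end OddAcrossReal

/-- `u` solves the Dirichlet problem `lap u = f` in the part of `ball z r` in the open upper
half-plane, with zero boundary values on the real axis. -/
structure IsHalfDiscSolution (u f : ℂ → ℝ) (z : ℂ) (r : ℝ) : Prop where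
  continuousOn : ContinuousOn u (ball z r ∩ {w | 0 ≤ w.im})
  contDiffOn : ContDiffOn ℝ 2 u (halfDisc z r)
  lap_eq : ∀ w ∈ halfDisc z r, lap u w = f w
  eq_zero : ∀ w ∈ ball z r, w.im = 0 → u w = 0

/-- `G` is an entire function whose real part approximates `v` to second order in the part of
`ball z r` in the open upper half-plane. -/
structure IsHalfDiscApprox (v : ℂ → ℝ) (z : ℂ) (r η : ℝ) (G : ℂ → ℂ) : Prop where
  differentiable : Differentiable ℂ G
  oddAcrossReal : OddAcrossReal G z r
  abs_sub_le : ∀ w ∈ halfDisc z r, |v w - (G w).re| ≤ η * r ^ 2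

namespace IsHalfDiscSolution

lemma contDiffAt (h : IsHalfDiscSolution u f z r) (hw : w ∈ halfDisc z r) : ContDiffAt ℝ 2 u w :=
  h.contDiffOn.contDiffAt ((isOpen_halfDisc z r).mem_nhds hw)

lemma mono {z' : ℂ} {r' : ℝ} (h : IsHalfDiscSolution u f z r) (hr : r' + dist z' z ≤ r) :
    IsHalfDiscSolution u f z' r' where
  continuousOn := h.continuousOn.mono (inter_subset_inter_left _ (ball_subset_ball' hr))
  contDiffOn := h.contDiffOn.mono (halfDisc_subset_halfDisc hr)
  lap_eq w hw := h.lap_eq w (halfDisc_subset_halfDisc hr hw)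
  eq_zero w hw := h.eq_zero w (ball_subset_ball' hr hw)

lemma sub_re (h : IsHalfDiscSolution u f z r) (hG : Differentiable ℂ G)
    (hodd : OddAcrossReal G z r) : IsHalfDiscSolution (fun w => u w - (G w).re) f z r where
  continuousOn := h.continuousOn.sub (continuous_re.comp hG.continuous).continuousOn
  contDiffOn := h.contDiffOn.sub fun w _ => (contDiffAt_re (hG.analyticAt w)).contDiffWithinAt
  lap_eq w hw := by
    rw [lap_sub (h.contDiffAt hw) (contDiffAt_re (hG.analyticAt w)), lap_re (hG.analyticAt w),
      sub_zero, h.lap_eq w hw]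
  eq_zero w hw hw0 := by rw [h.eq_zero w hw hw0, hodd.re_eq_zero hw hw0, sub_zero]

lemma sub_const_mul_im_sub_sq (h : IsHalfDiscSolution u f z r) (c : ℝ) {d : ℝ}
    (hd : d = 0 ∨ r ≤ z.im) :
    IsHalfDiscSolution (fun w => u w - c / 2 * (w.im - d) ^ 2) (fun w => f w - c) z r := by
  have hquad : ContDiff ℝ 2 fun w : ℂ => c / 2 * (w.im - d) ^ 2 :=
    contDiff_const.mul (contDiff_im_sub_sq d)
  refine ⟨h.continuousOn.sub hquad.continuous.continuousOn, h.contDiffOn.sub hquad.contDiffOn,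
    fun w hw => ?_, fun w hw hw0 => ?_⟩
  · rw [lap_sub (h.contDiffAt hw) hquad.contDiffAt,
      lap_const_mul _ (contDiff_im_sub_sq d).contDiffAt, lap_im_sub_sq, h.lap_eq w hw]
    ring
  · rcases hd with rfl | hd
    · simp [h.eq_zero w hw hw0, hw0]
    · have := abs_lt.1 (abs_im_sub_im_lt_of_mem_ball hw)
      linarith

lemma exists_isHalfDiscApprox (h : IsHalfDiscSolution v g z (4 * r)) (hz : 0 < z.im)
    (hr : 0 < r) (hη : 0 < η) (hg : ∀ w ∈ halfDisc z (4 * r), |g w| ≤ η) :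
    ∃ G, IsHalfDiscApprox v z r (3 * η) G := by
  have hlap : ∀ w ∈ halfDisc z (4 * r), |lap v w| ≤ η := fun w hw => h.lap_eq w hw ▸ hg w hw
  rcases le_or_gt r z.im with hzr | hzr
  · have hball : ball z r ⊆ halfDisc z (4 * r) := fun w hw => by
      have := abs_lt.1 (abs_im_sub_im_lt_of_mem_ball hw)
      exact ⟨ball_subset_ball (by linarith) hw, show 0 < w.im by linarith⟩
    have hclosed : closedBall z r ⊆ ball z (4 * r) ∩ {w | 0 ≤ w.im} := fun w hw => by
      have him := abs_le.1 ((abs_im_le_norm _).trans (mem_closedBall_iff_norm.1 hw))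
      rw [sub_im] at him
      exact ⟨closedBall_subset_ball (by linarith) hw, show 0 ≤ w.im by linarith⟩
    obtain ⟨P, hP, hvP⟩ := exists_entire_abs_sub_re_le_on_closedBall (h.continuousOn.mono hclosed)
      (h.contDiffOn.mono hball) (fun w hw => hlap w (hball hw)) hr (by positivity : 0 < η * r ^ 2)
    refine ⟨P, hP, .inl hzr, fun w hw => (hvP w (ball_subset_closedBall hw.1)).trans ?_⟩
    nlinarith [mul_pos hη (pow_pos hr 2)]
  · have hdist : dist (z.re : ℂ) z < r := by
      rwa [dist_of_re_eq (by simp), ofReal_im, Real.dist_eq, zero_sub, abs_neg, abs_of_pos hz]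
    have hball : closedBall (z.re : ℂ) (2 * r) ⊆ ball z (4 * r) :=
      closedBall_subset_ball' (by linarith)
    have hhalf : halfDisc z.re (2 * r) ⊆ halfDisc z (4 * r) :=
      halfDisc_subset_halfDisc (by linarith)
    obtain ⟨Q, hQ, hodd, hvQ⟩ := exists_entire_odd_abs_sub_re_le_on_halfDisc
      (h.continuousOn.mono (inter_subset_inter_left _ hball)) (h.contDiffOn.mono hhalf)
      (fun w hw => hlap w (hhalf hw)) (fun w hw => h.eq_zero w (hball hw))
      (by positivity : 0 < 2 * r) hη.le (by positivity : 0 < η * r ^ 2)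
    refine ⟨Q, hQ, .inr hodd, fun w hw => (hvQ w (halfDisc_subset_halfDisc ?_ hw)).trans_eq ?_⟩
    · rw [dist_comm]
      linarith
    · ring

end IsHalfDiscSolution

namespace IsHalfDiscApprox

lemma abs_re_le (h : IsHalfDiscApprox v z r η G) (hA : ∀ w ∈ halfDisc z r, |v w| ≤ A * r ^ 2) :
    ∀ w ∈ halfDisc z r, |(G w).re| ≤ (A + η) * r ^ 2 := fun w hw => by
  have h1 := abs_le.1 (h.abs_sub_le w hw)
  have h2 := abs_le.1 (hA w hw)
  exact abs_le.2 ⟨by linarith, by linarith⟩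

lemma norm_iteratedDeriv_le (h : IsHalfDiscApprox v z r η G) (hz : 0 < z.im) (hr : 0 < r)
    (hA : ∀ w ∈ halfDisc z r, |v w| ≤ A * r ^ 2) {n : ℕ} (hn : n ≠ 0)
    (hw : w ∈ closedBall z (r / 4)) :
    ‖iteratedDeriv n G w‖ ≤ n.factorial * (4 * ((A + η) * r ^ 2)) / (r / 4) ^ n :=
  h.oddAcrossReal.norm_iteratedDeriv_le h.differentiable hz (h.abs_re_le hA) hr hn hw

lemma half (h : IsHalfDiscApprox v z r η G) (hr : 0 < r) :
    IsHalfDiscApprox v z (r / 2) (4 * η) G where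
  differentiable := h.differentiable
  oddAcrossReal := h.oddAcrossReal.mono (by linarith)
  abs_sub_le w hw :=
    (h.abs_sub_le w (halfDisc_subset_halfDisc (by rw [dist_self]; linarith) hw)).trans_eq (by ring)

lemma norm_iteratedDeriv_sub_le {η' : ℝ} (h : IsHalfDiscApprox v z r η G)
    (h' : IsHalfDiscApprox v z r η' F) (hz : 0 < z.im) (hr : 0 < r) {n : ℕ} (hn : n ≠ 0)
    (hw : w ∈ closedBall z (r / 4)) :
    ‖iteratedDeriv n F w - iteratedDeriv n G w‖ ≤
      n.factorial * (4 * ((η + η') * r ^ 2)) / (r / 4) ^ n := by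
  have hle : ∀ w ∈ halfDisc z r, |(F w - G w).re| ≤ (η + η') * r ^ 2 := fun w hw => by
    have hF := abs_le.1 (h'.abs_sub_le w hw)
    have hG := abs_le.1 (h.abs_sub_le w hw)
    rw [sub_re]
    exact abs_le.2 ⟨by linarith, by linarith⟩
  have hderiv := (h'.oddAcrossReal.sub h.oddAcrossReal).norm_iteratedDeriv_le
    (h'.differentiable.sub h.differentiable) hz hle hr hn hw
  rwa [iteratedDeriv_fun_sub h'.differentiable.contDiff.contDiffAt
    h.differentiable.contDiff.contDiffAt] at hderiv

end IsHalfDiscApprox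

end HalfDisc

/-! ### Hessian bounds by dyadic approximation -/

section Dyadic

variable {u v f g : ℂ → ℝ} {z w : ℂ} {r A : ℝ} {η : ℕ → ℝ} {G : ℕ → ℂ → ℂ}

lemma iteratedDeriv_two_quadratic (a b c z : ℂ) :
    iteratedDeriv 2 (fun w => a + b * (w - z) + c / 2 * (w - z) ^ 2) z = c := by
  have hderiv : deriv (fun w => a + b * (w - z) + c / 2 * (w - z) ^ 2) =
      fun w => b + c * (w - z) := by
    ext w
    have hsub : HasDerivAt (fun w => w - z) 1 w := (hasDerivAt_id w).sub_const z
    refine ((((hsub.const_mul b).const_add a).add ((hsub.pow 2).const_mul (c / 2))).congr_deriv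
      ?_).deriv
    simp
    ring
  rw [iteratedDeriv_succ, iteratedDeriv_one, hderiv]
  simp

lemma exists_entire_sub_re_isLittleO (hv : ContDiffAt ℝ 2 v z) (hlap : lap v z = 0) :
    ∃ T : ℂ → ℂ, Differentiable ℂ T ∧ iteratedDeriv 2 T z = complexHess v z ∧
      (fun w => v w - (T w).re) =o[𝓝 z] fun w => ‖w - z‖ ^ 2 := by
  set b : ℂ := ⟨fderiv ℝ v z 1, -fderiv ℝ v z I⟩
  have hb : ∀ h, (b * h).re = fderiv ℝ v z h := fun h => by
    conv_rhs => rw [← re_add_im h]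
    rw [map_add, ← mul_one (h.re : ℂ), ← real_smul, ← real_smul, map_smul, map_smul]
    simp [b, mul_comm]
  have hH : ∀ h, (complexHess v z / 2 * h ^ 2).re = 1 / 2 * fderiv ℝ (fderiv ℝ v) z h h := by
    intro h
    have hhess := hess_eq_complexHess hv h h
    rw [hess_eq_fderiv_fderiv hv, hlap, zero_mul, zero_add] at hhess
    rw [hhess, ← re_ofReal_mul]
    congr 1
    push_cast
    ring
  refine ⟨fun w => v z + b * (w - z) + complexHess v z / 2 * (w - z) ^ 2, by fun_prop,
    iteratedDeriv_two_quadratic _ _ _ _, (taylor_two_isLittleO hv).congr_left fun w => ?_⟩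
  rw [add_re, add_re, hb, hH, ofReal_re, smul_eq_mul]
  ring

lemma tendsto_iteratedDeriv_complexHess (hv : ContDiffAt ℝ 2 v z) (hlap : lap v z = 0)
    (hz : 0 < z.im) (hr : 0 < r) (hη : Tendsto η atTop (𝓝 0))
    (hG : ∀ k, IsHalfDiscApprox v z (r / 2 ^ k) (η k) (G k)) :
    Tendsto (fun k => iteratedDeriv 2 (G k) z) atTop (𝓝 (complexHess v z)) := by
  obtain ⟨T, hT, hT2, hvT⟩ := exists_entire_sub_re_isLittleO hv hlap
  rw [Metric.tendsto_nhds]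
  intro ε hε
  have hε' : 0 < ε / 512 := by positivity
  obtain ⟨δ, hδ, hδv⟩ := eventually_nhds_iff_ball.1 (hvT.def hε')
  have hrk : Tendsto (fun k : ℕ => r / 2 ^ k) atTop (𝓝 0) :=
    tendsto_const_nhds.div_atTop (tendsto_pow_atTop_atTop_of_one_lt one_lt_two)
  filter_upwards [hrk.eventually (gt_mem_nhds hz), hrk.eventually (gt_mem_nhds hδ),
    hη.eventually (gt_mem_nhds hε')] with k hkz hkδ hkη
  have hrk0 : 0 < r / 2 ^ k := by positivity
  have hTk : IsHalfDiscApprox v z (r / 2 ^ k) (ε / 512) T := by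
    refine ⟨hT, .inl hkz.le, fun w hw => (hδv w (ball_subset_ball hkδ.le hw.1)).trans ?_⟩
    rw [norm_pow, norm_norm]
    gcongr
    exact (mem_ball_iff_norm.1 hw.1).le
  have hdist := hTk.norm_iteratedDeriv_sub_le (hG k) hz hrk0 two_ne_zero
    (mem_closedBall_self (by positivity))
  rw [hT2, ← dist_eq_norm, Nat.factorial_two, Nat.cast_ofNat] at hdist
  calc dist (iteratedDeriv 2 (G k) z) (complexHess v z) ≤ _ := hdist
    _ = 128 * (ε / 512 + η k) := by field_simp; norm_num; ring
    _ < ε := by linarith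

lemma norm_iteratedDeriv_succ_sub_le (hz : 0 < z.im) (hr : 0 < r) (hη : Antitone η)
    (hG : ∀ k, IsHalfDiscApprox v z (r / 2 ^ k) (η k) (G k)) {n : ℕ} (hn : n ≠ 0) {k : ℕ}
    (hw : w ∈ closedBall z (r / 2 ^ k / 8)) :
    ‖iteratedDeriv n (G (k + 1)) w - iteratedDeriv n (G k) w‖ ≤
      n.factorial * (5 * η k * (r / 2 ^ k) ^ 2) / (r / 2 ^ k / 8) ^ n := by
  have hsucc := hG (k + 1)
  rw [pow_succ, ← div_div] at hsucc
  refine (((hG k).half (by positivity)).norm_iteratedDeriv_sub_le hsucc hz (by positivity) hn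
    (by convert hw using 2; ring)).trans ?_
  rw [show r / 2 ^ k / 2 / 4 = r / 2 ^ k / 8 by ring]
  gcongr ?_ / _
  gcongr ?_ * ?_
  nlinarith [hη k.le_succ, sq_nonneg (r / 2 ^ k)]

lemma norm_iteratedDeriv_sub_complexHess_le (hv : ContDiffAt ℝ 2 v z) (hlap : lap v z = 0)
    (hz : 0 < z.im) (hr : 0 < r) (hη : Antitone η) (hsum : Summable η)
    (hG : ∀ k, IsHalfDiscApprox v z (r / 2 ^ k) (η k) (G k)) (k : ℕ) :
    ‖iteratedDeriv 2 (G k) z - complexHess v z‖ ≤ 640 * ∑' j, η (k + j) := by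
  rw [← tsum_mul_left, ← dist_eq_norm]
  refine dist_le_tsum_of_dist_le_of_tendsto (fun k => 640 * η k) (fun k => ?_)
    (hsum.mul_left 640)
    (tendsto_iteratedDeriv_complexHess hv hlap hz hr hsum.tendsto_atTop_zero hG) k
  rw [dist_comm, dist_eq_norm]
  refine (norm_iteratedDeriv_succ_sub_le hz hr hη hG two_ne_zero
    (mem_closedBall_self (by positivity))).trans_eq ?_
  rw [Nat.factorial_two]
  field_simp
  norm_num
  ring

lemma halfDisc_div_two_pow_subset (hr : 0 < r) (k : ℕ) :
    halfDisc z (4 * (r / 2 ^ k)) ⊆ halfDisc z (4 * r) := by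
  have : r / 2 ^ k ≤ r := div_le_self hr.le (one_le_pow₀ one_le_two)
  exact halfDisc_subset_halfDisc (by rw [dist_self]; linarith)

namespace IsHalfDiscSolution

lemma exists_isHalfDiscApprox_seq (h : IsHalfDiscSolution v g z (4 * r)) (hz : 0 < z.im)
    (hr : 0 < r) (hη : ∀ k, 0 < η k) (hg : ∀ k, ∀ w ∈ halfDisc z (4 * (r / 2 ^ k)), |g w| ≤ η k) :
    ∃ G : ℕ → ℂ → ℂ, ∀ k, IsHalfDiscApprox v z (r / 2 ^ k) (3 * η k) (G k) := by
  have hmono : ∀ k, IsHalfDiscSolution v g z (4 * (r / 2 ^ k)) := fun k => by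
    have : r / 2 ^ k ≤ r := div_le_self hr.le (one_le_pow₀ one_le_two)
    exact h.mono (by rw [dist_self]; linarith)
  choose G hG using fun k =>
    (hmono k).exists_isHalfDiscApprox hz (by positivity) (hη k) (hg k)
  exact ⟨G, hG⟩

lemma complexHess_sub_const_mul_im_sub_sq (h : IsHalfDiscSolution u f z r) (c d : ℝ)
    (hw : w ∈ halfDisc z r) :
    complexHess (fun w => u w - c / 2 * (w.im - d) ^ 2) w = complexHess u w := by
  have hquad := (contDiff_im_sub_sq d).contDiffAt (x := w)
  rw [complexHess_sub (h.contDiffAt hw) (contDiffAt_const.mul hquad), sub_eq_self]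
  simp [complexHess, hess_const_mul (c / 2) hquad, hess_im_sub_sq, Complex.ext_iff]

lemma exists_sub_quadratic (h : IsHalfDiscSolution u f z (4 * r)) (hz : 0 < z.im) (c : ℝ) :
    ∃ v, IsHalfDiscSolution v (fun w => f w - c) z (4 * r) ∧
      (∀ w ∈ halfDisc z (4 * r), complexHess v w = complexHess u w) ∧
      ∀ w ∈ halfDisc z r, |v w| ≤ |u w| + 13 * |c| * r ^ 2 := by
  -- Away from the real axis the quadratic is centred at `z`, near it at the axis, so that it is
  -- `O(r²)` in either case.
  obtain ⟨d, hd, hdr⟩ : ∃ d, (d = 0 ∨ 4 * r ≤ z.im) ∧ ∀ w ∈ ball z r, |w.im - d| ≤ 5 * r := by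
    rcases le_or_gt (4 * r) z.im with hzr | hzr
    · refine ⟨z.im, .inr hzr, fun w hw => (abs_im_sub_im_lt_of_mem_ball hw).le.trans ?_⟩
      linarith [pos_of_mem_ball hw]
    · refine ⟨0, .inl rfl, fun w hw => ?_⟩
      have := abs_lt.1 (abs_im_sub_im_lt_of_mem_ball hw)
      rw [sub_zero]
      exact abs_le.2 ⟨by linarith, by linarith⟩
  refine ⟨_, h.sub_const_mul_im_sub_sq c hd,
    fun w hw => h.complexHess_sub_const_mul_im_sub_sq c d hw, fun w hw => ?_⟩
  have hsq : (w.im - d) ^ 2 ≤ 25 * r ^ 2 := by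
    nlinarith [abs_le.1 (hdr w hw.1)]
  calc |u w - c / 2 * (w.im - d) ^ 2| ≤ |u w| + |c / 2 * (w.im - d) ^ 2| := abs_sub _ _
    _ = |u w| + |c| / 2 * (w.im - d) ^ 2 := by
      rw [abs_mul, abs_div, abs_two, abs_of_nonneg (sq_nonneg (w.im - d))]
    _ ≤ |u w| + 13 * |c| * r ^ 2 := by
      nlinarith [abs_nonneg c, mul_nonneg (abs_nonneg c) (sq_nonneg r)]

lemma norm_complexHess_le (h : IsHalfDiscSolution u f z (4 * r)) (hz : 0 < z.im) (hr : 0 < r)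
    (hA : ∀ w ∈ halfDisc z r, |u w| ≤ A * r ^ 2) (hη : ∀ k, 0 < η k) (hηa : Antitone η)
    (hsum : Summable η) (hf : ∀ k, ∀ w ∈ halfDisc z (4 * (r / 2 ^ k)), |f w - f z| ≤ η k) :
    ‖complexHess u z‖ ≤ 2400 * (A + 13 * |f z| + ∑' k, η k) := by
  obtain ⟨v, hv, hvu, hvle⟩ := h.exists_sub_quadratic hz (f z)
  have hz4 : z ∈ halfDisc z (4 * r) := mem_halfDisc_self hz (by positivity)
  obtain ⟨G, hG⟩ := hv.exists_isHalfDiscApprox_seq hz hr hη hf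
  have hvz : lap v z = 0 := by rw [hv.lap_eq z hz4, sub_self]
  have hA' : ∀ w ∈ halfDisc z r, |v w| ≤ (A + 13 * |f z|) * r ^ 2 := fun w hw => by
    linarith [hvle w hw, hA w hw]
  have hG0 := hG 0
  rw [pow_zero, div_one] at hG0
  have hfirst := hG0.norm_iteratedDeriv_le hz hr hA' two_ne_zero
    (mem_closedBall_self (by positivity))
  have hlimit := norm_iteratedDeriv_sub_complexHess_le (hv.contDiffAt hz4) hvz hz hr
    (hηa.const_mul (by norm_num)) (hsum.mul_left 3) hG 0
  have hη0 : η 0 ≤ ∑' k, η k := hsum.le_tsum 0 fun k _ => (hη k).le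
  have hA0 : 0 ≤ A + 13 * |f z| := nonneg_of_mul_nonneg_left
    ((abs_nonneg _).trans (hA' z (mem_halfDisc_self hz hr))) (by positivity)
  simp only [zero_add, tsum_mul_left] at hlimit
  have hfirst' : (Nat.factorial 2 : ℝ) * (4 * ((A + 13 * |f z| + 3 * η 0) * r ^ 2)) / (r / 4) ^ 2 =
      128 * (A + 13 * |f z| + 3 * η 0) := by
    rw [Nat.factorial_two]
    field_simp
    norm_num
    ring
  rw [hfirst'] at hfirst
  rw [← hvu z hz4]
  linarith [hη 0, norm_le_insert (iteratedDeriv 2 (G 0) z) (complexHess v z)]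

end IsHalfDiscSolution

end Dyadic

/-! ### Logarithmic and Hölder bounds in half-discs -/

section DyadicHolder

lemma exists_mul_pow_le {l M N : ℝ} (hl : 0 < l) (hl1 : l < 1) (hM : 0 < M) (hN : 0 < N) :
    ∃ K : ℕ, N * l ^ K ≤ M ∧ K ≤ Real.log (1 + N / M) / Real.log l⁻¹ + 1 := by
  have hL : 0 < Real.log l⁻¹ := Real.log_pos ((one_lt_inv₀ hl).2 hl1)
  have hx : 0 < N / M := by positivity
  have hX : 0 < Real.log (1 + N / M) := Real.log_pos (by linarith)
  refine ⟨_, ?_, (Nat.ceil_lt_add_one (by positivity)).le⟩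
  have hceil := Nat.le_ceil (Real.log (1 + N / M) / Real.log l⁻¹)
  rw [div_le_iff₀ hL, ← Real.log_pow, Real.log_le_log_iff (by positivity) (by positivity), inv_pow,
    ← one_div, le_div_iff₀ (by positivity)] at hceil
  rw [← div_le_one hM, mul_div_right_comm]
  exact (mul_le_mul_of_nonneg_right (by linarith) (by positivity)).trans hceil

lemma summable_min_geometric {l M N : ℝ} (hl : 0 < l) (hl1 : l < 1) (hM : 0 ≤ M) (hN : 0 ≤ N) :
    Summable fun j : ℕ => min M (N * l ^ j) :=
  ((summable_geometric_of_lt_one hl.le hl1).mul_left N).of_nonneg_of_le (fun _ => by positivity)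
    fun _ => min_le_right _ _

lemma tsum_min_geometric_le {l M N : ℝ} (hl : 0 < l) (hl1 : l < 1) (hM : 0 < M) (hN : 0 < N) :
    ∑' j : ℕ, min (2 * M) (N * l ^ j) ≤
      (2 / Real.log l⁻¹ + 2 + (1 - l)⁻¹) * (M * (1 + Real.log (1 + N / M))) := by
  obtain ⟨K, hNK, hK⟩ := exists_mul_pow_le hl hl1 hM hN
  have hsum := summable_min_geometric hl hl1 (by positivity : 0 ≤ 2 * M) hN.le
  have hgeom := (summable_geometric_of_lt_one hl.le hl1).mul_left M
  have hhead : ∑ j ∈ Finset.range K, min (2 * M) (N * l ^ j) ≤ K * (2 * M) :=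
    (Finset.sum_le_sum fun j _ => min_le_left (2 * M) (N * l ^ j)).trans_eq (by simp)
  have htail : ∑' j, min (2 * M) (N * l ^ (j + K)) ≤ M * (1 - l)⁻¹ := by
    rw [← tsum_geometric_of_lt_one hl.le hl1, ← tsum_mul_left]
    refine ((summable_nat_add_iff K).2 hsum).tsum_le_tsum
      (fun j => (min_le_right _ _).trans ?_) hgeom
    rw [pow_add, mul_comm (l ^ j), ← mul_assoc]
    gcongr
  have hX : 0 ≤ Real.log (1 + N / M) := Real.log_nonneg (by linarith [div_pos hN hM])
  have hc : 0 ≤ (1 - l)⁻¹ := inv_nonneg.2 (by linarith)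
  have hL : 0 < Real.log l⁻¹ := Real.log_pos ((one_lt_inv₀ hl).2 hl1)
  set X := Real.log (1 + N / M)
  calc ∑' j, min (2 * M) (N * l ^ j)
      = ∑ j ∈ Finset.range K, min (2 * M) (N * l ^ j) + ∑' j, min (2 * M) (N * l ^ (j + K)) :=
        (hsum.sum_add_tsum_nat_add K).symm
    _ ≤ (X / Real.log l⁻¹ + 1) * (2 * M) + M * (1 - l)⁻¹ := by
        refine add_le_add (hhead.trans ?_) htail
        gcongr
    _ = (2 / Real.log l⁻¹ * X + 2 + (1 - l)⁻¹) * M := by ring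
    _ ≤ (2 / Real.log l⁻¹ * (1 + X) + 2 * (1 + X) + (1 - l)⁻¹ * (1 + X)) * M := by
        gcongr <;> nlinarith
    _ = _ := by ring

/-- Hölder continuity in dyadic form: points of `S` at distance at most `r / 2 ^ k` have images at
distance at most `N * l ^ k`. With `l = (1 / 2) ^ α` this is Hölder continuity of exponent `α`. -/
def DyadicHolderOn (f : ℂ → ℝ) (N l r : ℝ) (S : Set ℂ) : Prop :=
  ∀ k : ℕ, ∀ w ∈ S, ∀ w' ∈ S, dist w w' ≤ r / 2 ^ k → |f w - f w'| ≤ N * l ^ k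

variable {u v f g : ℂ → ℝ} {z z' w : ℂ} {r A M N l : ℝ} {G : ℕ → ℂ → ℂ}

lemma DyadicHolderOn.abs_sub_le (h : DyadicHolderOn f N l (4 * r) (halfDisc z (4 * r)))
    (hz : 0 < z.im) (hr : 0 < r) (k : ℕ) (hw : w ∈ halfDisc z (4 * (r / 2 ^ k))) :
    |f w - f z| ≤ N * l ^ k :=
  h k w (halfDisc_div_two_pow_subset hr k hw) z (mem_halfDisc_self hz (by positivity))
    ((mem_ball.1 hw.1).le.trans_eq (mul_div_assoc _ _ _).symm)

lemma IsHalfDiscSolution.norm_complexHess_le_log (h : IsHalfDiscSolution u f z (4 * r))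
    (hf : DyadicHolderOn f N l (4 * r) (halfDisc z (4 * r))) (hz : 0 < z.im) (hr : 0 < r)
    (hl : 0 < l) (hl1 : l < 1) (hM : 0 < M) (hN : 0 < N) (hA0 : 0 ≤ A)
    (hA : ∀ w ∈ halfDisc z r, |u w| ≤ A * r ^ 2) (hfM : ∀ w ∈ halfDisc z (4 * r), |f w| ≤ M) :
    ‖complexHess u z‖ ≤ 2400 * (15 + 2 / Real.log l⁻¹ + (1 - l)⁻¹) *
      (A + M * (1 + Real.log (1 + N / M))) := by
  have hfz := hfM z (mem_halfDisc_self hz (by positivity))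
  have hbound := h.norm_complexHess_le hz hr hA (η := fun k => min (2 * M) (N * l ^ k))
    (fun k => by positivity)
    (fun i j hij => min_le_min_left _ (mul_le_mul_of_nonneg_left
      (pow_le_pow_of_le_one hl.le hl1.le hij) hN.le))
    (summable_min_geometric hl hl1 (by positivity) hN.le)
    (fun k w hw => le_min ?_ (hf.abs_sub_le hz hr k hw))
  · have htsum := tsum_min_geometric_le hl hl1 hM hN
    have hX : 0 ≤ Real.log (1 + N / M) := Real.log_nonneg (by linarith [div_pos hN hM])
    have hMX : M ≤ M * (1 + Real.log (1 + N / M)) := by nlinarith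
    have hc : 0 ≤ 2 / Real.log l⁻¹ + (1 - l)⁻¹ := by
      have hL : 0 < Real.log l⁻¹ := Real.log_pos ((one_lt_inv₀ hl).2 hl1)
      have : 0 < 1 - l := by linarith
      positivity
    nlinarith [mul_nonneg hc hA0]
  · have := hfM w (halfDisc_div_two_pow_subset hr k hw)
    exact (abs_sub _ _).trans (by linarith)

section Approx

variable (hG : ∀ k, IsHalfDiscApprox v z (r / 2 ^ k) (3 * (N * l ^ k)) (G k)) (hz : 0 < z.im)
  (hr : 0 < r) (hN : 0 < N)
include hG hz hr hN

lemma norm_iteratedDeriv_two_sub_complexHess_geometric_le (hv : ContDiffAt ℝ 2 v z)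
    (hlap : lap v z = 0) (hl : 0 < l) (hl1 : l < 1) (k : ℕ) :
    ‖iteratedDeriv 2 (G k) z - complexHess v z‖ ≤ 1920 * (1 - l)⁻¹ * N * l ^ k := by
  have hbound := norm_iteratedDeriv_sub_complexHess_le hv hlap hz hr
    (η := fun k => 3 * (N * l ^ k))
    (fun i j hij => by have := pow_le_pow_of_le_one hl.le hl1.le hij; dsimp only; gcongr)
    (((summable_geometric_of_lt_one hl.le hl1).mul_left N).mul_left 3) hG k
  simp only [pow_add, tsum_mul_left, tsum_geometric_of_lt_one hl.le hl1] at hbound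
  linarith

lemma norm_iteratedDeriv_three_geometric_le (hA0 : 0 ≤ A)
    (hA : ∀ w ∈ halfDisc z r, |v w| ≤ A * r ^ 2) (hl : 1 / 2 < l) (hl1 : l < 1) (k : ℕ)
    (hw : w ∈ closedBall z (r / 2 ^ k / 8)) :
    ‖iteratedDeriv 3 (G k) w‖ ≤ 46080 / (2 * l - 1) * (A + N) * (2 * l) ^ k / r := by
  have hl2 : 0 < 2 * l - 1 := by linarith
  have hD : 46080 ≤ 46080 / (2 * l - 1) := le_div_self (by norm_num) hl2 (by linarith)
  induction k with
  | zero =>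
    have hG0 := hG 0
    simp only [pow_zero, div_one, mul_one] at hG0 hw ⊢
    refine (hG0.norm_iteratedDeriv_le hz hr hA three_ne_zero
      (closedBall_subset_closedBall (by linarith) hw)).trans ?_
    calc _ = 1536 * (A + 3 * N) / r := by
          rw [show Nat.factorial 3 = 6 from rfl]
          field_simp
          norm_num
      _ ≤ _ := div_le_div_of_nonneg_right (by nlinarith) hr.le
  | succ k ih =>
    have hw' : w ∈ closedBall z (r / 2 ^ k / 8) := closedBall_subset_closedBall
      (by rw [pow_succ, ← div_div]; linarith [show 0 < r / 2 ^ k by positivity]) hw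
    have hstep := norm_iteratedDeriv_succ_sub_le hz hr (η := fun k => 3 * (N * l ^ k))
      (fun i j hij => by
        have := pow_le_pow_of_le_one (by linarith) hl1.le hij; dsimp only; gcongr)
      hG three_ne_zero hw'
    calc ‖iteratedDeriv 3 (G (k + 1)) w‖ ≤ _ := norm_le_insert' _ (iteratedDeriv 3 (G k) w)
      _ ≤ _ := add_le_add (ih hw') hstep
      _ = (46080 / (2 * l - 1) * (A + N) + 46080 * N) * (2 * l) ^ k / r := by
          rw [show Nat.factorial 3 = 6 from rfl, mul_pow]
          field_simp
          norm_num
          ring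
      _ ≤ (46080 / (2 * l - 1) * (A + N) * (2 * l)) * (2 * l) ^ k / r := by
          gcongr
          nlinarith [div_mul_cancel₀ (46080 : ℝ) hl2.ne']
      _ = _ := by ring

lemma norm_iteratedDeriv_two_sub_geometric_le (hA0 : 0 ≤ A)
    (hA : ∀ w ∈ halfDisc z r, |v w| ≤ A * r ^ 2) (hl : 1 / 2 < l) (hl1 : l < 1) {k : ℕ}
    (hw : dist w z ≤ r / 2 ^ k / 8) :
    ‖iteratedDeriv 2 (G k) w - iteratedDeriv 2 (G k) z‖ ≤
      46080 / (2 * l - 1) * (A + N) * l ^ k := by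
  have hl2 : 0 < 2 * l - 1 := by linarith
  have hd : Differentiable ℂ (iteratedDeriv 2 (G k)) :=
    (hG k).differentiable.contDiff.differentiable_iteratedDeriv (n := 3) 2
      (by exact_mod_cast Nat.lt_succ_self 2)
  calc _ ≤ 46080 / (2 * l - 1) * (A + N) * (2 * l) ^ k / r * ‖w - z‖ :=
        (convex_closedBall z (r / 2 ^ k / 8)).norm_image_sub_le_of_norm_deriv_le
          (fun y _ => hd y) (fun y hy => by
            rw [← iteratedDeriv_succ]
            exact norm_iteratedDeriv_three_geometric_le hG hz hr hN hA0 hA hl hl1 k hy)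
          (mem_closedBall_self (by positivity)) hw
    _ ≤ 46080 / (2 * l - 1) * (A + N) * (2 * l) ^ k / r * (r / 2 ^ k / 8) := by
        rw [← dist_eq_norm]
        gcongr
    _ = 46080 / (2 * l - 1) * (A + N) * l ^ k / 8 := by
        rw [mul_pow]
        field_simp
    _ ≤ _ := div_le_self (by positivity) (by norm_num)

lemma norm_complexHess_sub_iteratedDeriv_geometric_le (hv : IsHalfDiscSolution v g z (4 * r))
    (hg : DyadicHolderOn g N l (4 * r) (halfDisc z (4 * r))) (hgz : g z = 0) (hl : 0 < l)
    (hl1 : l < 1) (hz' : 0 < z'.im) {k : ℕ} (hzz' : dist z' z ≤ r / 2 ^ k / 8) :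
    ‖complexHess v z' - iteratedDeriv 2 (G k) z'‖ ≤ 2400 * (205 + (1 - l)⁻¹) * N * l ^ k := by
  set ρ := r / 2 ^ k / 8 with hρ_def
  have hρ : 0 < ρ := by positivity
  have hrk : r / 2 ^ k = 8 * ρ := by rw [hρ_def]; ring
  have hρr : 8 * ρ ≤ r := hrk ▸ div_le_self hr.le (one_le_pow₀ one_le_two)
  have hsub : halfDisc z' (4 * ρ) ⊆ halfDisc z (r / 2 ^ k) :=
    halfDisc_subset_halfDisc (by linarith)
  have hsub4 : halfDisc z' (4 * ρ) ⊆ halfDisc z (4 * r) := halfDisc_subset_halfDisc (by linarith)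
  have hz'4 := mem_halfDisc_self hz' (by positivity : 0 < 4 * ρ)
  have hgz' : |g z'| ≤ N * l ^ k := by
    simpa [hgz] using hg k z' (hsub4 hz'4) z (mem_halfDisc_self hz (by positivity))
      (by rw [mul_div_assoc]; linarith)
  have hsol : IsHalfDiscSolution (fun w => v w - (G k w).re) g z' (4 * ρ) :=
    ((hv.mono (by rw [dist_self]; linarith)).sub_re (hG k).differentiable
      (hG k).oddAcrossReal).mono (by linarith)
  have hbound := hsol.norm_complexHess_le hz' hρ (A := 192 * (N * l ^ k))
    (η := fun j => N * l ^ (k + j))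
    (fun w hw => ((hG k).abs_sub_le w
      (hsub (halfDisc_subset_halfDisc (by rw [dist_self]; linarith) hw))).trans_eq
        (by rw [hrk]; ring))
    (fun j => by positivity)
    (fun i j hij => mul_le_mul_of_nonneg_left
        (pow_le_pow_of_le_one hl.le hl1.le (by omega)) hN.le)
    (by simpa only [pow_add, ← mul_assoc] using
      (summable_geometric_of_lt_one hl.le hl1).mul_left (N * l ^ k))
    (fun j w hw => hg (k + j) w (hsub4 (halfDisc_div_two_pow_subset hρ j hw)) z' (hsub4 hz'4)
      ((mem_ball.1 hw.1).le.trans ?_))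
  · rw [complexHess_sub (hv.contDiffAt (hsub4 hz'4))
      (contDiffAt_re ((hG k).differentiable.analyticAt z')),
      complexHess_re ((hG k).differentiable.analyticAt z')] at hbound
    simp only [pow_add, tsum_mul_left, tsum_geometric_of_lt_one hl.le hl1] at hbound
    linarith
  · rw [pow_add, ← div_div, mul_div_assoc 4 r, hrk, mul_div_assoc, mul_div_assoc]
    linarith [show 0 < ρ / 2 ^ j by positivity]

end Approx

lemma IsHalfDiscSolution.norm_complexHess_sub_le_geometric
    (h : IsHalfDiscSolution u f z (4 * r))
    (hf : DyadicHolderOn f N l (4 * r) (halfDisc z (4 * r))) (hz : 0 < z.im) (hr : 0 < r)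
    (hN : 0 < N) (hl : 1 / 2 < l) (hl1 : l < 1) (hA0 : 0 ≤ A)
    (hA : ∀ w ∈ halfDisc z r, |u w| ≤ A * r ^ 2) (hz' : 0 < z'.im) {k : ℕ}
    (hzz' : dist z' z ≤ r / 2 ^ k / 8) :
    ‖complexHess u z' - complexHess u z‖ ≤
      (492000 + 4320 * (1 - l)⁻¹ + 599040 / (2 * l - 1)) * (A + |f z| + N) * l ^ k := by
  have hl0 : 0 < l := by linarith
  obtain ⟨v, hv, hvu, hvA⟩ := h.exists_sub_quadratic hz (f z)
  have hg : DyadicHolderOn (fun w => f w - f z) N l (4 * r) (halfDisc z (4 * r)) :=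
    fun k w hw w' hw' hd => by simpa using hf k w hw w' hw' hd
  obtain ⟨G, hG⟩ := hv.exists_isHalfDiscApprox_seq hz hr (fun k => by positivity)
    fun k w hw => hf.abs_sub_le hz hr k hw
  have hz4 := mem_halfDisc_self hz (by positivity : 0 < 4 * r)
  have hz'4 : z' ∈ halfDisc z (4 * r) := by
    have := div_le_self hr.le (one_le_pow₀ one_le_two : (1 : ℝ) ≤ 2 ^ k)
    exact ⟨mem_ball.2 (by linarith), hz'⟩
  have hcenter := norm_iteratedDeriv_two_sub_complexHess_geometric_le hG hz hr hN
    (hv.contDiffAt hz4) (by rw [hv.lap_eq z hz4, sub_self]) hl0 hl1 k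
  have hmove := norm_iteratedDeriv_two_sub_geometric_le hG hz hr hN
    (by positivity : 0 ≤ A + 13 * |f z|) (fun w hw => by linarith [hvA w hw, hA w hw]) hl hl1 hzz'
  have hshift := norm_complexHess_sub_iteratedDeriv_geometric_le hG hz hr hN hv hg (sub_self _)
    hl0 hl1 hz' hzz'
  rw [← hvu z hz4, ← hvu z' hz'4]
  have : 0 < (1 - l)⁻¹ := inv_pos.2 (by linarith)
  have hl2 : 0 < 2 * l - 1 := by linarith
  calc ‖complexHess v z' - complexHess v z‖
      ≤ ‖complexHess v z' - iteratedDeriv 2 (G k) z'‖ +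
        ‖iteratedDeriv 2 (G k) z' - iteratedDeriv 2 (G k) z‖ +
        ‖iteratedDeriv 2 (G k) z - complexHess v z‖ := by
          simpa only [dist_eq_norm] using dist_triangle4 (complexHess v z')
            (iteratedDeriv 2 (G k) z') (iteratedDeriv 2 (G k) z) (complexHess v z)
    _ ≤ 2400 * (205 + (1 - l)⁻¹) * N * l ^ k +
        46080 / (2 * l - 1) * (A + 13 * |f z| + N) * l ^ k + 1920 * (1 - l)⁻¹ * N * l ^ k :=
          add_le_add_three hshift hmove hcenter
    _ = ((492000 + 4320 * (1 - l)⁻¹) * N + 46080 / (2 * l - 1) * (A + 13 * |f z| + N)) * l ^ k := by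
          ring
    _ ≤ ((492000 + 4320 * (1 - l)⁻¹) * (A + |f z| + N) +
        46080 / (2 * l - 1) * (13 * (A + |f z| + N))) * l ^ k := by
          gcongr <;> linarith [abs_nonneg (f z)]
    _ = _ := by ring

end DyadicHolder

/-! ### Sectors -/

section SectorGeometry

/-- The reflection across the bisector of `Sector β`, which exchanges the two edges. -/
def sectorReflect (β : ℝ) : ℂ ≃ₗᵢ[ℝ] ℂ := conjLIE.trans (rotation (Circle.exp (β * π)))

variable {β γ : ℝ} {z w : ℂ}

lemma sectorReflect_apply (β : ℝ) (w : ℂ) :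
    sectorReflect β w = exp ((β * π : ℝ) * I) * conj w := by
  simp [sectorReflect, Circle.coe_exp]

lemma sectorReflect_sectorReflect (β : ℝ) (w : ℂ) : sectorReflect β (sectorReflect β w) = w := by
  simp only [sectorReflect_apply, map_mul, conj_conj, ← exp_conj, conj_ofReal, conj_I]
  rw [← mul_assoc, ← exp_add, mul_neg, add_neg_cancel, exp_zero, one_mul]

lemma im_sectorReflect (β : ℝ) (w : ℂ) :
    (sectorReflect β w).im = ‖w‖ * Real.sin (β * π - arg w) := by
  have hconj : conj w = ‖w‖ * exp ((-arg w : ℝ) * I) := by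
    calc conj w = conj (‖w‖ * exp (arg w * I)) := by rw [norm_mul_exp_arg_mul_I]
      _ = ‖w‖ * exp ((-arg w : ℝ) * I) := by
        rw [map_mul, conj_ofReal, ← exp_conj, map_mul, conj_ofReal, conj_I, ofReal_neg, mul_neg,
          neg_mul]
  rw [sectorReflect_apply, hconj, mul_left_comm, ← exp_add, ← add_mul, ← ofReal_add, im_ofReal_mul,
    exp_ofReal_mul_I_im, ← sub_eq_add_neg]

lemma mem_sector_iff (hβ0 : 0 < β) (hβ : β ≤ 1) :
    w ∈ Sector β ↔ 0 < w.im ∧ 0 < (sectorReflect β w).im := by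
  have hπ := Real.pi_pos
  have hβπ : β * π ≤ π := mul_le_of_le_one_left hπ.le hβ
  have hβπ0 : 0 < β * π := by positivity
  rw [im_sectorReflect, ← norm_mul_sin_arg]
  constructor
  · rintro ⟨hw, harg0, harg⟩
    have hw := norm_pos_iff.2 hw
    exact ⟨mul_pos hw (Real.sin_pos_of_pos_of_lt_pi harg0 (by linarith)),
      mul_pos hw (Real.sin_pos_of_pos_of_lt_pi (by linarith) (by linarith))⟩
  · rintro ⟨hsin, hsin'⟩
    have hsin := pos_of_mul_pos_right hsin (norm_nonneg w)
    have hsin' := pos_of_mul_pos_right hsin' (norm_nonneg w)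
    have harg : 0 < arg w := by
      by_contra! h
      exact hsin.not_ge (Real.sin_nonpos_of_nonpos_of_neg_pi_le h (neg_pi_lt_arg w).le)
    refine ⟨?_, harg, ?_⟩
    · rintro rfl
      simp at harg
    · by_contra! h
      exact hsin'.not_ge (Real.sin_nonpos_of_nonpos_of_neg_pi_le (by linarith)
        (by linarith [arg_le_pi w]))

lemma im_sectorReflect_pos {r : ℝ} (hr : r ≤ (sectorReflect β z).im) (hw : w ∈ ball z r) :
    0 < (sectorReflect β w).im := by
  rw [mem_ball, ← (sectorReflect β).dist_map] at hw
  have him := (abs_lt.1 (abs_im_sub_im_lt_of_mem_ball (mem_ball.2 hw))).1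
  linarith

lemma isOpen_sector (hβ0 : 0 < β) (hβ : β ≤ 1) : IsOpen (Sector β) := by
  have hinter : Sector β = {w | 0 < w.im} ∩ {w | 0 < (sectorReflect β w).im} :=
    Set.ext fun w => mem_sector_iff hβ0 hβ
  rw [hinter]
  exact (isOpen_lt continuous_const continuous_im).inter
    (isOpen_lt continuous_const (continuous_im.comp (sectorReflect β).continuous))

lemma exp_bisector_mem_sector (hβ0 : 0 < β) (hβ : β ≤ 1) :
    exp ((β * π / 2 : ℝ) * I) ∈ Sector β := by
  have hπ := Real.pi_pos
  have hβπ : β * π ≤ π := mul_le_of_le_one_left hπ.le hβ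
  have hβπ0 : 0 < β * π := by positivity
  have harg : arg (exp ((β * π / 2 : ℝ) * I)) = β * π / 2 := by
    rw [exp_mul_I, arg_cos_add_sin_mul_I ⟨by linarith, by linarith⟩]
  exact ⟨exp_ne_zero _, by rw [harg]; positivity, by rw [harg]; linarith⟩

lemma mem_closure_sector_iff (hβ0 : 0 < β) (hβ : β ≤ 1) :
    w ∈ closure (Sector β) ↔ 0 ≤ w.im ∧ 0 ≤ (sectorReflect β w).im := by
  constructor
  · have hsub : closure (Sector β) ⊆ {w | 0 ≤ w.im} ∩ {w | 0 ≤ (sectorReflect β w).im} :=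
      closure_minimal (fun w hw => ((mem_sector_iff hβ0 hβ).1 hw).imp le_of_lt le_of_lt)
        ((isClosed_le continuous_const continuous_im).inter
          (isClosed_le continuous_const (continuous_im.comp (sectorReflect β).continuous)))
    exact fun hw => hsub hw
  · rintro ⟨hw, hw'⟩
    obtain ⟨hm, hm'⟩ := (mem_sector_iff hβ0 hβ).1 (exp_bisector_mem_sector hβ0 hβ)
    set m := exp ((β * π / 2 : ℝ) * I)
    have hlim : Tendsto (fun t : ℝ => w + t • m) (𝓝[>] 0) (𝓝 w) := by
      have : ContinuousAt (fun t : ℝ => w + t • m) 0 := by fun_prop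
      simpa [ContinuousAt] using this.tendsto.mono_left nhdsWithin_le_nhds
    refine mem_closure_of_tendsto hlim (eventually_mem_nhdsWithin.mono fun t ht => ?_)
    have ht : 0 < t := ht
    rw [mem_sector_iff hβ0 hβ, map_add, map_smul, add_im, add_im, smul_im, smul_im]
    constructor <;> positivity

lemma sectorReflect_mem_sector_iff (hβ0 : 0 < β) (hβ : β ≤ 1) :
    sectorReflect β w ∈ Sector β ↔ w ∈ Sector β := by
  rw [mem_sector_iff hβ0 hβ, mem_sector_iff hβ0 hβ, sectorReflect_sectorReflect, and_comm]

lemma preimage_sectorReflect_sector (hβ0 : 0 < β) (hβ : β ≤ 1) :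
    sectorReflect β ⁻¹' Sector β = Sector β :=
  Set.ext fun _ => sectorReflect_mem_sector_iff hβ0 hβ

lemma preimage_sectorReflect_closure_sector (hβ0 : 0 < β) (hβ : β ≤ 1) :
    sectorReflect β ⁻¹' closure (Sector β) = closure (Sector β) := by
  have := (sectorReflect β).toHomeomorph.preimage_closure (Sector β)
  rwa [LinearIsometryEquiv.coe_toHomeomorph, preimage_sectorReflect_sector hβ0 hβ] at this

lemma preimage_sectorReflect_frontier_sector (hβ0 : 0 < β) (hβ : β ≤ 1) :
    sectorReflect β ⁻¹' frontier (Sector β) = frontier (Sector β) := by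
  have := (sectorReflect β).toHomeomorph.preimage_frontier (Sector β)
  rwa [LinearIsometryEquiv.coe_toHomeomorph, preimage_sectorReflect_sector hβ0 hβ] at this

lemma sin_mul_norm_le_im_or (hβ : β ≤ 1 / 2) (hw : w ∈ Sector β) :
    Real.sin (β * π / 2) * ‖w‖ ≤ (sectorReflect β w).im ∨
      Real.sin (β * π / 2) * ‖w‖ ≤ w.im := by
  obtain ⟨-, harg0, harg⟩ := hw
  have hβπ : β * π ≤ π / 2 := by nlinarith [Real.pi_pos]
  rw [im_sectorReflect, ← norm_mul_sin_arg w, mul_comm]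
  refine (le_total (arg w) (β * π / 2)).imp (fun h => ?_) fun h => ?_ <;> gcongr
  · exact Real.sin_le_sin_of_le_of_le_pi_div_two (by linarith) (by linarith) (by linarith)
  · exact Real.sin_le_sin_of_le_of_le_pi_div_two (by linarith) (by linarith) (by linarith)

/-- The barrier for the Poisson equation: a quadratic polynomial with Laplacian `-1` which vanishes
on the two edges of the sector. -/
def sectorBarrier (β : ℝ) (w : ℂ) : ℝ :=
  (2 * Real.cos (β * π))⁻¹ * (w.im * (sectorReflect β w).im)

lemma contDiff_im_mul_im_sectorReflect (β : ℝ) :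
    ContDiff ℝ 2 fun w : ℂ => w.im * (sectorReflect β w).im :=
  imCLM.contDiff.mul (imCLM.contDiff.comp (sectorReflect β).contDiff)

lemma contDiff_sectorBarrier (β : ℝ) : ContDiff ℝ 2 (sectorBarrier β) :=
  contDiff_const.mul (contDiff_im_mul_im_sectorReflect β)

lemma lap_sectorBarrier (hβ : Real.cos (β * π) ≠ 0) (z : ℂ) : lap (sectorBarrier β) z = -1 := by
  have hhess := hess_mul_continuousLinearMap imCLM
    (imCLM.comp ((sectorReflect β).toContinuousLinearEquiv : ℂ →L[ℝ] ℂ))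
  have hlap : lap (fun w : ℂ => w.im * (sectorReflect β w).im) z = -(2 * Real.cos (β * π)) := by
    rw [lap_eq_hess]
    refine (congrArg₂ (· + ·) (hhess 1 1 z) (hhess I I z)).trans ?_
    simp [sectorReflect_apply, -ofReal_mul, exp_ofReal_mul_I_re, exp_ofReal_mul_I_im]
    ring
  unfold sectorBarrier
  rw [lap_const_mul _ (contDiff_im_mul_im_sectorReflect β).contDiffAt, hlap]
  field_simp

lemma cos_mul_pi_pos (hβ0 : 0 < β) (hβ : β < 1 / 2) : 0 < Real.cos (β * π) :=
  Real.cos_pos_of_mem_Ioo ⟨by nlinarith [Real.pi_pos], by nlinarith [Real.pi_pos]⟩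

lemma sectorBarrier_nonneg (hβ0 : 0 < β) (hβ : β < 1 / 2) (hw : w ∈ closure (Sector β)) :
    0 ≤ sectorBarrier β w := by
  obtain ⟨him, him'⟩ := (mem_closure_sector_iff hβ0 (by linarith)).1 hw
  have := cos_mul_pi_pos hβ0 hβ
  unfold sectorBarrier
  positivity

lemma sectorBarrier_le (hβ0 : 0 < β) (hβ : β < 1 / 2) (w : ℂ) :
    sectorBarrier β w ≤ (2 * Real.cos (β * π))⁻¹ * ‖w‖ ^ 2 := by
  have := cos_mul_pi_pos hβ0 hβ
  unfold sectorBarrier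
  gcongr
  calc w.im * (sectorReflect β w).im ≤ |w.im| * |(sectorReflect β w).im| := by
        rw [← abs_mul]
        exact le_abs_self _
    _ ≤ ‖w‖ * ‖sectorReflect β w‖ := by gcongr <;> exact abs_im_le_norm _
    _ = ‖w‖ ^ 2 := by rw [LinearIsometryEquiv.norm_map, sq]

/-- A homogeneous function of degree `γ`, positive and harmonic in the sector when `γ * β < 1`;
it dominates solutions growing slower than `‖w‖ ^ γ`. -/
def sectorGauge (β γ : ℝ) (w : ℂ) : ℝ := ((exp ((-(β * π / 2) : ℝ) * I) * w) ^ (γ : ℂ)).re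

lemma norm_exp_mul_I_mul (t : ℝ) (w : ℂ) : ‖exp (t * I) * w‖ = ‖w‖ := by
  rw [norm_mul, norm_exp_ofReal_mul_I, one_mul]

lemma abs_arg_rotate_sub_lt (hβ : β ≤ 1) (hw : w ∈ Sector β) :
    |arg (exp ((-(β * π / 2) : ℝ) * I) * w)| < β * π / 2 := by
  obtain ⟨hw, harg0, harg⟩ := hw
  have hβπ : β * π ≤ π := mul_le_of_le_one_left Real.pi_pos.le hβ
  have hpolar : exp ((-(β * π / 2) : ℝ) * I) * w =
      ‖w‖ * exp ((arg w - β * π / 2 : ℝ) * I) := by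
    conv_lhs => rw [← norm_mul_exp_arg_mul_I w]
    rw [mul_left_comm, ← exp_add, ← add_mul, ← ofReal_add, neg_add_eq_sub]
  rw [hpolar, arg_real_mul _ (norm_pos_iff.2 hw), exp_mul_I,
    arg_cos_add_sin_mul_I ⟨by linarith, by linarith⟩, abs_lt]
  constructor <;> linarith

lemma rotate_re_pos (hβ : β ≤ 1) (hw : w ∈ Sector β) :
    0 < (exp ((-(β * π / 2) : ℝ) * I) * w).re := by
  have harg := abs_lt.1 (abs_arg_rotate_sub_lt hβ hw)
  have hβπ : β * π ≤ π := mul_le_of_le_one_left Real.pi_pos.le hβ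
  rw [← norm_mul_cos_arg, norm_exp_mul_I_mul]
  exact mul_pos (norm_pos_iff.2 hw.1) (Real.cos_pos_of_mem_Ioo ⟨by linarith, by linarith⟩)

lemma continuousOn_sectorGauge (hβ : β ≤ 1) (hγ : 0 < γ) :
    ContinuousOn (sectorGauge β γ) (closure (Sector β)) := by
  intro w hw
  have hre : 0 ≤ (exp ((-(β * π / 2) : ℝ) * I) * w).re :=
    closure_minimal (t := {w | 0 ≤ (exp ((-(β * π / 2) : ℝ) * I) * w).re})
      (fun w hw => (rotate_re_pos hβ hw).le)
      (isClosed_le continuous_const (by fun_prop)) hw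
  have hpow := continuousAt_cpow_const_of_re_pos (w := (γ : ℂ)) (.inl hre) (by rwa [ofReal_re])
  have hrot : ContinuousAt (fun w => exp ((-(β * π / 2) : ℝ) * I) * w) w := by fun_prop
  exact (continuous_re.continuousAt.comp (hpow.comp_of_eq hrot rfl)).continuousWithinAt

lemma analyticAt_rotate_cpow (hβ : β ≤ 1) (hw : w ∈ Sector β) :
    AnalyticAt ℂ (fun w => (exp ((-(β * π / 2) : ℝ) * I) * w) ^ (γ : ℂ)) w :=
  (analyticAt_const.mul analyticAt_id).cpow analyticAt_const (.inl (rotate_re_pos hβ hw))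

lemma mul_rpow_norm_le_sectorGauge (hβ : β ≤ 1) (hγ : 0 < γ) (hγβ : γ * β ≤ 2)
    (hw : w ∈ closure (Sector β)) : Real.cos (γ * β * π / 2) * ‖w‖ ^ γ ≤ sectorGauge β γ w := by
  refine le_on_closure (f := fun w => Real.cos (γ * β * π / 2) * ‖w‖ ^ γ) (fun w hw => ?_) ?_
    (continuousOn_sectorGauge hβ hγ) hw
  · rw [sectorGauge, cpow_ofReal_re, norm_exp_mul_I_mul, mul_comm, ← Real.cos_abs (arg _ * γ),
      abs_mul, abs_of_pos hγ]
    gcongr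
    refine Real.cos_le_cos_of_nonneg_of_le_pi (by positivity) (by nlinarith [Real.pi_pos]) ?_
    nlinarith [abs_arg_rotate_sub_lt hβ hw]
  · exact (continuous_const.mul (continuous_norm.rpow_const fun _ => .inr hγ.le)).continuousOn

end SectorGeometry

/-! ### Solutions in the sector -/

section SectorSolution

/-- The relative Hölder condition `‖z‖ ^ α * |f z - f z'| ≤ N * ‖z - z'‖ ^ α` on `S`, which is
invariant under dilations and, for bounded functions, equivalent to finiteness of `ringNormC`. -/
def RelativeHolderOn (f : ℂ → ℝ) (N α : ℝ) (S : Set ℂ) : Prop :=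
  ∀ z ∈ S, ∀ z' ∈ S, ‖z‖ ^ α * |f z - f z'| ≤ N * ‖z - z'‖ ^ α

/-- `u` solves the Dirichlet problem `lap u = f` in `Sector β` with zero boundary values. -/
structure IsSectorSolution (β : ℝ) (u f : ℂ → ℝ) : Prop where
  continuousOn : ContinuousOn u (closure (Sector β))
  contDiffOn : ContDiffOn ℝ 2 u (Sector β)
  lap_eq : ∀ w ∈ Sector β, lap u w = f w
  eq_zero : ∀ w ∈ frontier (Sector β), u w = 0

/-- A solution of the Dirichlet problem in `Sector β` which grows at most quadratically, with
constant `A`, and whose right-hand side has supremum at most `M` and relative `α`-Hölder constant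
at most `N`. -/
structure IsHolderSectorSolution (α β A M N : ℝ) (u f : ℂ → ℝ) : Prop
    extends IsSectorSolution β u f where
  abs_le : ∀ w ∈ Sector β, |u w| ≤ A * ‖w‖ ^ 2
  abs_rhs_le : ∀ w ∈ Sector β, |f w| ≤ M
  relativeHolderOn : RelativeHolderOn f N α (Sector β)

variable {f g u : ℂ → ℝ} {z w : ℂ} {α β γ r t A B C M N : ℝ} {S T : Set ℂ}

lemma half_rpow_lt_one (hα : 0 < α) : (1 / 2 : ℝ) ^ α < 1 :=
  Real.rpow_lt_one (by norm_num) (by norm_num) hα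

lemma half_lt_half_rpow (hα : α < 1) : 1 / 2 < (1 / 2 : ℝ) ^ α := by
  simpa using Real.rpow_lt_rpow_of_exponent_gt (by norm_num : (0 : ℝ) < 1 / 2) (by norm_num) hα

lemma RelativeHolderOn.mono (h : RelativeHolderOn f N α S) (hTS : T ⊆ S) :
    RelativeHolderOn f N α T := fun z hz z' hz' => h z (hTS hz) z' (hTS hz')

lemma RelativeHolderOn.dyadicHolderOn (h : RelativeHolderOn f N α S) (hα : 0 ≤ α) (hN : 0 ≤ N)
    (hr : 0 < r) (hS : ∀ w ∈ S, r ≤ ‖w‖) : DyadicHolderOn f N ((1 / 2) ^ α) r S := by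
  intro k w hw w' hw' hd
  have hw0 : 0 < ‖w‖ ^ α := Real.rpow_pos_of_pos (hr.trans_le (hS w hw)) α
  rw [Real.rpow_pow_comm one_half_pos.le]
  refine le_of_mul_le_mul_left ((h w hw w' hw').trans ?_) hw0
  calc N * ‖w - w'‖ ^ α ≤ N * (‖w‖ * (1 / 2) ^ k) ^ α := by
        gcongr
        calc ‖w - w'‖ ≤ r / 2 ^ k := by rwa [← dist_eq_norm]
          _ = r * (1 / 2) ^ k := by rw [one_div, inv_pow, div_eq_mul_inv]
          _ ≤ ‖w‖ * (1 / 2) ^ k := by gcongr; exact hS w hw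
    _ = ‖w‖ ^ α * (N * ((1 / 2) ^ k) ^ α) := by
        rw [Real.mul_rpow (norm_nonneg w) (by positivity)]
        ring

lemma le_mul_rpow_of_dyadic {D x : ℝ} (hα0 : 0 ≤ α) (hα1 : α ≤ 1) (hx : 0 < x) (hB : 0 ≤ B)
    (hC : 0 ≤ C) (hDB : D ≤ B) (hD : ∀ k : ℕ, x ≤ (1 / 2) ^ k → D ≤ C * ((1 / 2) ^ α) ^ k) :
    D ≤ (B + 2 * C) * x ^ α := by
  rcases le_total x 1 with hx1 | hx1
  · obtain ⟨k, hk, hk'⟩ := exists_nat_pow_near_of_lt_one hx hx1 one_half_pos one_half_lt_one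
    have hxk : (1 / 2 : ℝ) ^ k ≤ 2 * x := by
      rw [pow_succ] at hk
      linarith
    calc D ≤ C * ((1 / 2) ^ α) ^ k := hD k hk'
      _ ≤ C * (2 * x) ^ α := by rw [Real.rpow_pow_comm one_half_pos.le]; gcongr
      _ ≤ C * (2 * x ^ α) := by
        rw [Real.mul_rpow zero_le_two hx.le]
        gcongr
        simpa using Real.rpow_le_rpow_of_exponent_le one_le_two hα1
      _ ≤ (B + 2 * C) * x ^ α := by nlinarith [Real.rpow_nonneg hx.le α]
  · have hxα := Real.one_le_rpow hx1 hα0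
    calc D ≤ (B + 2 * C) * 1 := by linarith
      _ ≤ (B + 2 * C) * x ^ α := by gcongr

lemma relativeHolderOn_of_dyadic (hα0 : 0 < α) (hα1 : α ≤ 1) (ht : 0 < t) (ht1 : t ≤ 1)
    (hC : 0 ≤ C) (hB : ∀ z ∈ S, |g z| ≤ B)
    (hg : ∀ k : ℕ, ∀ z ∈ S, ∀ z' ∈ S, dist z' z ≤ t * ‖z‖ / 2 ^ k →
      |g z' - g z| ≤ C * ((1 / 2) ^ α) ^ k) :
    RelativeHolderOn g (2 * (B + C) / t) α S := by
  intro z hz z' hz'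
  have hB0 : 0 ≤ B := (abs_nonneg _).trans (hB z hz)
  rcases eq_or_ne z 0 with rfl | hz0
  · rw [norm_zero, Real.zero_rpow hα0.ne', zero_mul]
    positivity
  rcases eq_or_ne z z' with rfl | hne
  · rw [sub_self, abs_zero, mul_zero]
    positivity
  have hnorm : 0 < ‖z‖ := norm_pos_iff.2 hz0
  have hdist : 0 < ‖z - z'‖ := norm_pos_iff.2 (sub_ne_zero.2 hne)
  obtain ⟨x, hx_def⟩ : ∃ x, x = ‖z - z'‖ / (t * ‖z‖) := ⟨_, rfl⟩
  have hx : 0 < x := by rw [hx_def]; positivity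
  have hxt : ‖z‖ * t * x = ‖z - z'‖ := by rw [hx_def]; field_simp
  have hle : |g z' - g z| ≤ (2 * B + 2 * C) * x ^ α := by
    refine le_mul_rpow_of_dyadic hα0.le hα1 hx (by positivity) hC ?_ fun k hk => ?_
    · linarith [abs_sub (g z') (g z), hB z hz, hB z' hz']
    · refine hg k z hz z' hz' ?_
      rw [dist_comm, dist_eq_norm, ← hxt, mul_comm t, div_eq_mul_inv, ← inv_pow, ← one_div]
      gcongr
  have htα : t ≤ t ^ α := by
    simpa using Real.rpow_le_rpow_of_exponent_ge ht ht1 hα1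
  rw [abs_sub_comm]
  calc ‖z‖ ^ α * |g z' - g z| ≤ ‖z‖ ^ α * ((2 * B + 2 * C) * x ^ α) := by gcongr
    _ = 2 * (B + C) / t * (‖z‖ ^ α * t * x ^ α) := by field_simp
    _ ≤ 2 * (B + C) / t * (‖z‖ ^ α * t ^ α * x ^ α) := by gcongr
    _ = 2 * (B + C) / t * ‖z - z'‖ ^ α := by
      rw [← hxt, Real.mul_rpow (by positivity) hx.le, Real.mul_rpow hnorm.le ht.le]

lemma halfDisc_subset_sector (hβ0 : 0 < β) (hβ : β ≤ 1) (hr : r ≤ (sectorReflect β z).im) :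
    halfDisc z r ⊆ Sector β := by
  rintro w ⟨hw, him⟩
  exact (mem_sector_iff hβ0 hβ).2 ⟨him, im_sectorReflect_pos hr hw⟩

namespace IsSectorSolution

lemma contDiffAt (h : IsSectorSolution β u f) (hβ0 : 0 < β) (hβ : β ≤ 1) (hz : z ∈ Sector β) :
    ContDiffAt ℝ 2 u z := h.contDiffOn.contDiffAt ((isOpen_sector hβ0 hβ).mem_nhds hz)

lemma neg (h : IsSectorSolution β u f) (hβ0 : 0 < β) (hβ : β ≤ 1) :
    IsSectorSolution β (fun w => -u w) fun w => -f w where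
  continuousOn := h.continuousOn.neg
  contDiffOn := h.contDiffOn.neg
  lap_eq w hw := by rw [lap_neg (h.contDiffAt hβ0 hβ hw), h.lap_eq w hw]
  eq_zero w hw := by rw [h.eq_zero w hw, neg_zero]

lemma reflect (h : IsSectorSolution β u f) (hβ0 : 0 < β) (hβ : β ≤ 1) :
    IsSectorSolution β (fun w => u (sectorReflect β w)) fun w => f (sectorReflect β w) where
  continuousOn := h.continuousOn.comp (sectorReflect β).continuous.continuousOn
    (preimage_sectorReflect_closure_sector hβ0 hβ).ge
  contDiffOn := h.contDiffOn.comp (sectorReflect β).contDiff.contDiffOn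
    (preimage_sectorReflect_sector hβ0 hβ).ge
  lap_eq w hw := by
    have hw' := (sectorReflect_mem_sector_iff hβ0 hβ).2 hw
    rw [lap_comp_linearIsometryEquiv _ (h.contDiffAt hβ0 hβ hw'), h.lap_eq _ hw']
  eq_zero w hw := h.eq_zero _ ((preimage_sectorReflect_frontier_sector hβ0 hβ).ge hw)

lemma isHalfDiscSolution (h : IsSectorSolution β u f) (hβ0 : 0 < β) (hβ : β ≤ 1)
    (hr : r ≤ (sectorReflect β z).im) : IsHalfDiscSolution u f z r where
  continuousOn := h.continuousOn.mono fun _ hw =>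
    (mem_closure_sector_iff hβ0 hβ).2 ⟨hw.2, (im_sectorReflect_pos hr hw.1).le⟩
  contDiffOn := h.contDiffOn.mono (halfDisc_subset_sector hβ0 hβ hr)
  lap_eq w hw := h.lap_eq w (halfDisc_subset_sector hβ0 hβ hr hw)
  eq_zero w hw him := by
    refine h.eq_zero w ((isOpen_sector hβ0 hβ).frontier_eq ▸ ⟨?_, fun hS => ?_⟩)
    · exact (mem_closure_sector_iff hβ0 hβ).2 ⟨him.ge, (im_sectorReflect_pos hr hw).le⟩
    · exact ((mem_sector_iff hβ0 hβ).1 hS).1.ne' him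

lemma le_mul_sectorBarrier (h : IsSectorSolution β u f) (hβ0 : 0 < β) (hβ : β < 1 / 2)
    (hγ : 0 < γ) (hγβ : γ * β < 1)
    (hgrowth : u =o[Bornology.cobounded ℂ ⊓ 𝓟 (Sector β)] fun w => ‖w‖ ^ γ) (hM : 0 ≤ M)
    (hf : ∀ w ∈ Sector β, -M ≤ f w) (hz : z ∈ Sector β) : u z ≤ M * sectorBarrier β z := by
  have hβ1 : β ≤ 1 := by linarith
  have hcos : 0 < Real.cos (γ * β * π / 2) :=
    Real.cos_pos_of_mem_Ioo ⟨by nlinarith [Real.pi_pos, mul_pos hγ hβ0], by nlinarith [Real.pi_pos]⟩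
  have hgauge (w : ℂ) (hw : w ∈ closure (Sector β)) := mul_rpow_norm_le_sectorGauge hβ1 hγ
    (by linarith : γ * β ≤ 2) hw
  have hbarrier (w : ℂ) (hw : w ∈ closure (Sector β)) := sectorBarrier_nonneg hβ0 hβ hw
  refine sub_nonpos.1 (nonpos_of_lap_nonneg_of_eventually_le
    (v := fun w => u w - M * sectorBarrier β w) (isOpen_sector hβ0 hβ1)
    (h.continuousOn.sub ((contDiff_sectorBarrier β).continuous.continuousOn.const_smul M))
    (h.contDiffOn.sub (contDiff_const.mul (contDiff_sectorBarrier β)).contDiffOn)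
    (fun w hw => ?_) (fun w hw => ?_) (continuousOn_sectorGauge hβ1 hγ)
    (fun w hw => (contDiffAt_re (analyticAt_rotate_cpow hβ1 hw)).contDiffWithinAt)
    (fun w hw => (lap_re (analyticAt_rotate_cpow hβ1 hw)).le)
    (fun w hw => le_trans (by positivity) (hgauge w hw.1)) (fun δ hδ => ?_) hz)
  · rw [lap_sub (h.contDiffAt hβ0 hβ1 hw)
        (contDiff_const.mul (contDiff_sectorBarrier β)).contDiffAt,
      lap_const_mul _ (contDiff_sectorBarrier β).contDiffAt, h.lap_eq w hw,
      lap_sectorBarrier (cos_mul_pi_pos hβ0 hβ).ne']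
    linarith [hf w hw]
  · rw [h.eq_zero w hw, zero_sub, neg_nonpos]
    exact mul_nonneg hM (hbarrier w hw.1)
  · filter_upwards [hgrowth.bound (mul_pos hδ hcos), mem_inf_of_right (mem_principal_self _)]
      with w hw hwS
    rw [Real.norm_eq_abs, Real.norm_of_nonneg (by positivity), mul_assoc] at hw
    calc u w - M * sectorBarrier β w ≤ |u w| := by
          linarith [le_abs_self (u w), mul_nonneg hM (hbarrier w (subset_closure hwS))]
      _ ≤ δ * sectorGauge β γ w := hw.trans (by gcongr; exact hgauge w (subset_closure hwS))

lemma abs_le_mul_sq_norm (h : IsSectorSolution β u f) (hβ0 : 0 < β) (hβ : β < 1 / 2)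
    (hγ : 0 < γ) (hγβ : γ * β < 1)
    (hgrowth : u =o[Bornology.cobounded ℂ ⊓ 𝓟 (Sector β)] fun w => ‖w‖ ^ γ) (hM : 0 ≤ M)
    (hf : ∀ w ∈ Sector β, |f w| ≤ M) (hz : z ∈ Sector β) :
    |u z| ≤ (2 * Real.cos (β * π))⁻¹ * M * ‖z‖ ^ 2 := by
  have hle : M * sectorBarrier β z ≤ (2 * Real.cos (β * π))⁻¹ * M * ‖z‖ ^ 2 := by
    rw [mul_comm _ M, mul_assoc]
    gcongr
    exact sectorBarrier_le hβ0 hβ z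
  refine (abs_le'.2 ⟨?_, ?_⟩).trans hle
  · exact h.le_mul_sectorBarrier hβ0 hβ hγ hγβ hgrowth hM (fun w hw => (abs_le.1 (hf w hw)).1) hz
  · exact (h.neg hβ0 (by linarith)).le_mul_sectorBarrier hβ0 hβ hγ hγβ hgrowth.neg_left hM
      (fun w hw => neg_le_neg (abs_le.1 (hf w hw)).2) hz

end IsSectorSolution

namespace IsHolderSectorSolution

lemma reflect (h : IsHolderSectorSolution α β A M N u f) (hβ0 : 0 < β) (hβ : β ≤ 1) :
    IsHolderSectorSolution α β A M N (fun w => u (sectorReflect β w))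
      fun w => f (sectorReflect β w) where
  toIsSectorSolution := h.toIsSectorSolution.reflect hβ0 hβ
  abs_le w hw := by
    simpa using h.abs_le _ ((sectorReflect_mem_sector_iff hβ0 hβ).2 hw)
  abs_rhs_le w hw := h.abs_rhs_le _ ((sectorReflect_mem_sector_iff hβ0 hβ).2 hw)
  relativeHolderOn w hw w' hw' := by
    simpa [← map_sub] using h.relativeHolderOn _ ((sectorReflect_mem_sector_iff hβ0 hβ).2 hw) _
      ((sectorReflect_mem_sector_iff hβ0 hβ).2 hw')

end IsHolderSectorSolution

end SectorSolution

/-! ### Estimates for the Hessian in the sector -/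

section SectorHessian

variable {f u : ℂ → ℝ} {z z' w a b : ℂ} {α β r t A K M N : ℝ}

lemma le_norm_of_mem_ball (hr : 2 * r ≤ ‖z‖) (hw : w ∈ ball z r) : r ≤ ‖w‖ := by
  linarith [norm_sub_norm_le z w, norm_sub_rev z w, mem_ball_iff_norm.1 hw]

lemma norm_le_two_mul_of_mem_ball (hr : r ≤ ‖z‖) (hw : w ∈ ball z r) : ‖w‖ ≤ 2 * ‖z‖ := by
  linarith [norm_sub_norm_le w z, mem_ball_iff_norm.1 hw]

lemma hess_reflect (u : ℂ → ℝ) (a b z : ℂ) :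
    hess (fun w => u (sectorReflect β w)) (sectorReflect β a) (sectorReflect β b)
      (sectorReflect β z) = hess u a b z := by
  simpa [sectorReflect_sectorReflect] using
    hess_comp_continuousLinearEquiv (u := u) (z := sectorReflect β z)
      (sectorReflect β).toContinuousLinearEquiv (sectorReflect β a) (sectorReflect β b)

lemma sin_half_pos (hβ0 : 0 < β) (hβ : β ≤ 1) : 0 < Real.sin (β * π / 2) :=
  Real.sin_pos_of_pos_of_lt_pi (by positivity) (by nlinarith [Real.pi_pos])

namespace IsHolderSectorSolution

lemma dyadicHolderOn (h : IsHolderSectorSolution α β A M N u f) (hβ0 : 0 < β) (hβ : β ≤ 1)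
    (hα : 0 ≤ α) (hN : 0 ≤ N) (hr0 : 0 < r) (hr : r ≤ (sectorReflect β z).im)
    (hrz : 2 * r ≤ ‖z‖) : DyadicHolderOn f N ((1 / 2) ^ α) r (halfDisc z r) :=
  (h.relativeHolderOn.mono (halfDisc_subset_sector hβ0 hβ hr)).dyadicHolderOn hα hN hr0
    fun _ hw => le_norm_of_mem_ball hrz hw.1

lemma abs_le_of_mem_ball (h : IsHolderSectorSolution α β A M N u f) (hA : 0 ≤ A) (ht : 0 < t)
    (ht1 : t ≤ 1) (hw : w ∈ Sector β) (hwz : w ∈ ball z (t * ‖z‖ / 8)) :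
    |u w| ≤ 256 * A / t ^ 2 * (t * ‖z‖ / 8) ^ 2 :=
  calc |u w| ≤ A * ‖w‖ ^ 2 := h.abs_le w hw
    _ ≤ A * (2 * ‖z‖) ^ 2 := by
      gcongr
      exact norm_le_two_mul_of_mem_ball (by nlinarith [norm_nonneg z]) hwz
    _ = 256 * A / t ^ 2 * (t * ‖z‖ / 8) ^ 2 := by
      field_simp
      ring

lemma abs_hess_le_log_of_le_im (h : IsHolderSectorSolution α β A M N u f) (hβ0 : 0 < β)
    (hβ : β ≤ 1) (hα : 0 < α) (hA : 0 ≤ A) (hM : 0 < M) (hN : 0 < N) (ht : 0 < t) (ht1 : t ≤ 1)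
    (hz : z ∈ Sector β) (hfar : t * ‖z‖ ≤ (sectorReflect β z).im) (ha : ‖a‖ = 1) (hb : ‖b‖ = 1) :
    |hess u a b z| ≤ M + 2400 * (15 + 2 / Real.log ((1 / 2) ^ α)⁻¹ + (1 - (1 / 2) ^ α)⁻¹) *
      (256 * A / t ^ 2 + M * (1 + Real.log (1 + N / M))) := by
  have hz0 : 0 < ‖z‖ := norm_pos_iff.2 hz.1
  have hr : 0 < t * ‖z‖ / 8 := by positivity
  have hr4 : 4 * (t * ‖z‖ / 8) ≤ (sectorReflect β z).im := by linarith [mul_pos ht hz0]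
  have hsub := halfDisc_subset_sector hβ0 hβ hr4
  have hsub' : halfDisc z (t * ‖z‖ / 8) ⊆ Sector β :=
    halfDisc_subset_sector hβ0 hβ (by linarith)
  have hcomplex := (h.isHalfDiscSolution hβ0 hβ hr4).norm_complexHess_le_log
    (h.dyadicHolderOn hβ0 hβ hα.le hN.le (by positivity) hr4 (by nlinarith))
    ((mem_sector_iff hβ0 hβ).1 hz).1 hr (by positivity) (half_rpow_lt_one hα) hM hN
    (by positivity) (fun w hw => h.abs_le_of_mem_ball hA ht ht1 (hsub' hw) hw.1)
    fun w hw => h.abs_rhs_le w (hsub hw)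
  have hhess := abs_hess_le (h.contDiffAt hβ0 hβ hz) a b
  rw [ha, hb, h.lap_eq z hz] at hhess
  linarith [h.abs_rhs_le z hz]

lemma abs_hess_sub_le_of_le_im (h : IsHolderSectorSolution α β A M N u f) (hβ0 : 0 < β)
    (hβ : β ≤ 1) (hα0 : 0 < α) (hα1 : α < 1) (hA : 0 ≤ A) (hN : 0 < N) (ht : 0 < t) (ht1 : t ≤ 1)
    (hz : z ∈ Sector β) (hz' : z' ∈ Sector β) (hfar : t * ‖z‖ ≤ (sectorReflect β z).im) {k : ℕ}
    (hzz' : dist z' z ≤ t / 64 * ‖z‖ / 2 ^ k) (ha : ‖a‖ = 1) (hb : ‖b‖ = 1) :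
    |hess u a b z' - hess u a b z| ≤
      (N + (492000 + 4320 * (1 - (1 / 2) ^ α)⁻¹ + 599040 / (2 * (1 / 2) ^ α - 1)) *
        (256 * A / t ^ 2 + M + N)) * ((1 / 2) ^ α) ^ k := by
  have hz0 : 0 < ‖z‖ := norm_pos_iff.2 hz.1
  obtain ⟨r, hr_def⟩ : ∃ r, r = t * ‖z‖ / 8 := ⟨_, rfl⟩
  have hr : 0 < r := by rw [hr_def]; positivity
  have hr4 : 4 * r ≤ (sectorReflect β z).im := by linarith [mul_pos ht hz0]
  have hzz' : dist z' z ≤ r / 2 ^ k / 8 := hzz'.trans_eq (by rw [hr_def]; ring)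
  have hk : r / 2 ^ k ≤ r := div_le_self hr.le (one_le_pow₀ one_le_two)
  have hf := h.dyadicHolderOn hβ0 hβ hα0.le hN.le (by positivity) hr4 (by nlinarith)
  have him := ((mem_sector_iff hβ0 hβ).1 hz).1
  have him' := ((mem_sector_iff hβ0 hβ).1 hz').1
  have hsub : halfDisc z r ⊆ Sector β := halfDisc_subset_sector hβ0 hβ (by linarith)
  have hl := half_lt_half_rpow hα1
  have hl1 := half_rpow_lt_one hα0
  have hcomplex := (h.isHalfDiscSolution hβ0 hβ hr4).norm_complexHess_sub_le_geometric hf him hr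
    hN hl hl1 (by positivity) (fun w hw => hr_def ▸
      h.abs_le_of_mem_ball hA ht ht1 (hsub hw) (hr_def ▸ hw.1)) him' hzz'
  have hlap : |f z' - f z| ≤ N * ((1 / 2) ^ α) ^ k := by
    refine hf k z' ⟨mem_ball.2 (by linarith), him'⟩ z (mem_halfDisc_self him (by positivity)) ?_
    rw [mul_div_assoc]
    linarith [dist_nonneg (x := z') (y := z)]
  have hhess := abs_hess_sub_le (h.contDiffAt hβ0 hβ hz') (h.contDiffAt hβ0 hβ hz) a b
  rw [ha, hb, h.lap_eq z hz, h.lap_eq z' hz', mul_one, mul_one] at hhess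
  have h2l : 0 < 2 * (1 / 2 : ℝ) ^ α - 1 := by linarith
  have : 0 < 1 - (1 / 2 : ℝ) ^ α := by linarith
  rw [add_mul]
  refine hhess.trans (add_le_add hlap (hcomplex.trans ?_))
  gcongr
  exact h.abs_rhs_le z hz

lemma abs_hess_le_log (h : IsHolderSectorSolution α β A M N u f) (hβ0 : 0 < β)
    (hβ : β ≤ 1 / 2) (hα : 0 < α) (hA : 0 ≤ A) (hM : 0 < M) (hN : 0 < N) (hz : z ∈ Sector β)
    (ha : ‖a‖ = 1) (hb : ‖b‖ = 1) :
    |hess u a b z| ≤ M + 2400 * (15 + 2 / Real.log ((1 / 2) ^ α)⁻¹ + (1 - (1 / 2) ^ α)⁻¹) *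
      (256 * A / Real.sin (β * π / 2) ^ 2 + M * (1 + Real.log (1 + N / M))) := by
  have hβ1 : β ≤ 1 := by linarith
  have hs := sin_half_pos hβ0 hβ1
  have hs1 := Real.sin_le_one (β * π / 2)
  rcases sin_mul_norm_le_im_or hβ hz with hfar | hfar
  · exact h.abs_hess_le_log_of_le_im hβ0 hβ1 hα hA hM hN hs hs1 hz hfar ha hb
  · rw [← hess_reflect (β := β)]
    exact (h.reflect hβ0 hβ1).abs_hess_le_log_of_le_im hβ0 hβ1 hα hA hM hN hs hs1
      ((sectorReflect_mem_sector_iff hβ0 hβ1).2 hz)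
      (by rwa [LinearIsometryEquiv.norm_map, sectorReflect_sectorReflect])
      (by rwa [LinearIsometryEquiv.norm_map]) (by rwa [LinearIsometryEquiv.norm_map])

lemma abs_hess_sub_le (h : IsHolderSectorSolution α β A M N u f) (hβ0 : 0 < β) (hβ : β ≤ 1 / 2)
    (hα0 : 0 < α) (hα1 : α < 1) (hA : 0 ≤ A) (hN : 0 < N) (hz : z ∈ Sector β)
    (hz' : z' ∈ Sector β) {k : ℕ}
    (hzz' : dist z' z ≤ Real.sin (β * π / 2) / 64 * ‖z‖ / 2 ^ k) (ha : ‖a‖ = 1) (hb : ‖b‖ = 1) :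
    |hess u a b z' - hess u a b z| ≤
      (N + (492000 + 4320 * (1 - (1 / 2) ^ α)⁻¹ + 599040 / (2 * (1 / 2) ^ α - 1)) *
        (256 * A / Real.sin (β * π / 2) ^ 2 + M + N)) * ((1 / 2) ^ α) ^ k := by
  have hβ1 : β ≤ 1 := by linarith
  have hs := sin_half_pos hβ0 hβ1
  have hs1 := Real.sin_le_one (β * π / 2)
  rcases sin_mul_norm_le_im_or hβ hz with hfar | hfar
  · exact h.abs_hess_sub_le_of_le_im hβ0 hβ1 hα0 hα1 hA hN hs hs1 hz hz' hfar hzz' ha hb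
  · rw [← hess_reflect (β := β) u a b z, ← hess_reflect (β := β) u a b z']
    exact (h.reflect hβ0 hβ1).abs_hess_sub_le_of_le_im hβ0 hβ1 hα0 hα1 hA hN hs hs1
      ((sectorReflect_mem_sector_iff hβ0 hβ1).2 hz) ((sectorReflect_mem_sector_iff hβ0 hβ1).2 hz')
      (by rwa [LinearIsometryEquiv.norm_map, sectorReflect_sectorReflect])
      (by rwa [LinearIsometryEquiv.dist_map, LinearIsometryEquiv.norm_map])
      (by rwa [LinearIsometryEquiv.norm_map]) (by rwa [LinearIsometryEquiv.norm_map])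

lemma hess_eq_zero (h : IsHolderSectorSolution α β 0 M N u f) (hβ0 : 0 < β) (hβ : β ≤ 1)
    (hz : z ∈ Sector β) (a b : ℂ) : hess u a b z = 0 := by
  have hu : ∀ w ∈ Sector β, u w = 0 := fun w hw => by simpa using h.abs_le w hw
  rw [hess_congr (eventuallyEq_of_mem ((isOpen_sector hβ0 hβ).mem_nhds hz) hu)]
  simp [hess]

end IsHolderSectorSolution

lemma exists_abs_hess_le_log (hβ0 : 0 < β) (hβ : β ≤ 1 / 2) (hα : 0 < α) (hK : 0 ≤ K) :
    ∃ C > 0, ∀ {u f : ℂ → ℝ} {M N : ℝ}, 0 ≤ M → M ≤ N →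
      IsHolderSectorSolution α β (K * M) M N u f → ∀ {a b : ℂ}, ‖a‖ = 1 → ‖b‖ = 1 →
      ∀ z ∈ Sector β, |hess u a b z| ≤ C * M * (1 + Real.log (1 + N / M)) := by
  have hs := sin_half_pos hβ0 (by linarith)
  have hl1 := half_rpow_lt_one hα
  set s := Real.sin (β * π / 2)
  have hlog : 0 < Real.log ((1 / 2 : ℝ) ^ α)⁻¹ :=
    Real.log_pos ((one_lt_inv₀ (by positivity)).2 hl1)
  have : 0 < (1 - (1 / 2 : ℝ) ^ α)⁻¹ := inv_pos.2 (by linarith)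
  set c := 2400 * (15 + 2 / Real.log ((1 / 2) ^ α)⁻¹ + (1 - (1 / 2) ^ α)⁻¹)
  have : 0 < c := by positivity
  refine ⟨1 + c * (256 * K / s ^ 2 + 1), by positivity, ?_⟩
  intro u f M N hM hMN h a b ha hb z hz
  rcases hM.eq_or_lt with rfl | hM
  · rw [mul_zero] at h
    simp [h.hess_eq_zero hβ0 (by linarith) hz]
  have hN : 0 < N := by linarith
  have hL : 0 ≤ Real.log (1 + N / M) := Real.log_nonneg (le_add_of_nonneg_right (by positivity))
  set L := Real.log (1 + N / M)
  calc |hess u a b z| ≤ M + c * (256 * (K * M) / s ^ 2 + M * (1 + L)) :=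
        h.abs_hess_le_log hβ0 hβ hα (by positivity) hM hN hz ha hb
    _ = (1 + c * (256 * K / s ^ 2)) * (M * 1) + c * (M * (1 + L)) := by ring
    _ ≤ (1 + c * (256 * K / s ^ 2)) * (M * (1 + L)) + c * (M * (1 + L)) := by
      gcongr
      linarith
    _ = (1 + c * (256 * K / s ^ 2 + 1)) * M * (1 + L) := by ring

lemma exists_abs_hess_sub_le (hβ0 : 0 < β) (hβ : β ≤ 1 / 2) (hα0 : 0 < α) (hα1 : α < 1)
    (hK : 0 ≤ K) :
    ∃ C > 0, ∀ {u f : ℂ → ℝ} {N : ℝ}, 0 ≤ N → IsHolderSectorSolution α β (K * N) N N u f →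
      ∀ {a b : ℂ}, ‖a‖ = 1 → ‖b‖ = 1 → ∀ k : ℕ, ∀ z ∈ Sector β, ∀ z' ∈ Sector β,
      dist z' z ≤ Real.sin (β * π / 2) / 64 * ‖z‖ / 2 ^ k →
      |hess u a b z' - hess u a b z| ≤ C * N * ((1 / 2) ^ α) ^ k := by
  have hs := sin_half_pos hβ0 (by linarith)
  have hl := half_lt_half_rpow hα1
  have hinv : 0 < (1 - (1 / 2 : ℝ) ^ α)⁻¹ := inv_pos.2 (by linarith [half_rpow_lt_one hα0])
  have hdiv : 0 < 599040 / (2 * (1 / 2 : ℝ) ^ α - 1) := div_pos (by norm_num) (by linarith)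
  set c := 492000 + 4320 * (1 - (1 / 2 : ℝ) ^ α)⁻¹ + 599040 / (2 * (1 / 2) ^ α - 1)
  have : 0 < c := by positivity
  refine ⟨1 + c * (256 * K / Real.sin (β * π / 2) ^ 2 + 2), by positivity, ?_⟩
  intro u f N hN h a b ha hb k z hz z' hz' hd
  rcases hN.eq_or_lt with rfl | hN
  · rw [mul_zero] at h
    simp [h.hess_eq_zero hβ0 (by linarith) hz, h.hess_eq_zero hβ0 (by linarith) hz']
  refine (h.abs_hess_sub_le hβ0 hβ hα0 hα1 (by positivity) hN hz hz' hd ha hb).trans_eq ?_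
  ring

lemma exists_relativeHolderOn_hess (hβ0 : 0 < β) (hβ : β ≤ 1 / 2) (hα0 : 0 < α) (hα1 : α < 1)
    (hK : 0 ≤ K) :
    ∃ C > 0, ∀ {u f : ℂ → ℝ} {N : ℝ}, 0 ≤ N → IsHolderSectorSolution α β (K * N) N N u f →
      ∀ {a b : ℂ}, ‖a‖ = 1 → ‖b‖ = 1 → (∀ z ∈ Sector β, |hess u a b z| ≤ C * N) ∧
        RelativeHolderOn (hess u a b) (C * N) α (Sector β) := by
  obtain ⟨B, hB, hlog⟩ := exists_abs_hess_le_log hβ0 hβ hα0 hK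
  obtain ⟨D, hD, hdyadic⟩ := exists_abs_hess_sub_le hβ0 hβ hα0 hα1 hK
  have hs := sin_half_pos hβ0 (by linarith)
  have hs1 := Real.sin_le_one (β * π / 2)
  set s := Real.sin (β * π / 2)
  refine ⟨2 * (2 * B + D) / (s / 64), by positivity, ?_⟩
  intro u f N hN h a b ha hb
  have hsup : ∀ z ∈ Sector β, |hess u a b z| ≤ 2 * B * N := fun z hz => by
    have hlog2 : Real.log (1 + N / N) ≤ 1 := by
      linarith [Real.log_le_sub_one_of_pos (by positivity : 0 < 1 + N / N), div_self_le_one N]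
    calc |hess u a b z| ≤ B * N * (1 + Real.log (1 + N / N)) := hlog hN le_rfl h ha hb z hz
      _ ≤ B * N * (1 + 1) := by gcongr
      _ = 2 * B * N := by ring
  refine ⟨fun z hz => (hsup z hz).trans ?_, ?_⟩
  · gcongr
    rw [le_div_iff₀ (by positivity)]
    nlinarith
  · convert relativeHolderOn_of_dyadic hα0 hα1.le (by positivity) (by linarith) (by positivity)
      hsup (hdyadic hN h ha hb) using 1
    ring

end SectorHessian

/-! ### Scale-invariant norms -/

section Norms

variable {f g u : ℂ → ℝ} {z z' : ℂ} {α β γ A B C₀ M : ℝ} {S T : Set ℂ}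

lemma abs_rpow_norm_sub_le (hα0 : 0 ≤ α) (hα1 : α ≤ 1) (z z' : ℂ) :
    |‖z‖ ^ α - ‖z'‖ ^ α| ≤ ‖z - z'‖ ^ α := by
  have key (z z' : ℂ) : ‖z‖ ^ α - ‖z'‖ ^ α ≤ ‖z - z'‖ ^ α := by
    refine sub_le_iff_le_add.2 ?_
    calc ‖z‖ ^ α ≤ (‖z - z'‖ + ‖z'‖) ^ α := by
          gcongr
          exact norm_le_norm_sub_add z z'
      _ ≤ ‖z - z'‖ ^ α + ‖z'‖ ^ α :=
        Real.rpow_add_le_add_rpow (norm_nonneg _) (norm_nonneg _) hα0 hα1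
  rw [abs_sub_le_iff]
  exact ⟨key z z', norm_sub_rev z z' ▸ key z' z⟩

lemma abs_le_toReal_supNormC (h : supNormC S f ≠ ⊤) (hz : z ∈ S) :
    |f z| ≤ (supNormC S f).toReal := by
  have hle : (‖f z‖₊ : ℝ≥0∞) ≤ supNormC S f :=
    le_iSup (fun z : S => (‖f (z : ℂ)‖₊ : ℝ≥0∞)) ⟨z, hz⟩
  simpa using ENNReal.toReal_mono h hle

lemma abs_sub_le_toReal_holderSemiC (h : holderSemiC α S g ≠ ⊤) (hz : z ∈ S) (hz' : z' ∈ S) :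
    |g z - g z'| ≤ (holderSemiC α S g).toReal * ‖z - z'‖ ^ α := by
  rcases eq_or_ne z z' with rfl | hne
  · rw [sub_self, abs_zero]
    positivity
  have hpos : 0 < ‖z - z'‖ ^ α := Real.rpow_pos_of_pos (norm_sub_pos_iff.2 hne) _
  have hle : (‖g z - g z'‖₊ : ℝ≥0∞) / ENNReal.ofReal (‖z - z'‖ ^ α) ≤ holderSemiC α S g :=
    le_iSup (fun p : {q : S × S // (q.1 : ℂ) ≠ (q.2 : ℂ)} =>
      (‖g (p.1.1 : ℂ) - g (p.1.2 : ℂ)‖₊ : ℝ≥0∞) /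
        ENNReal.ofReal (‖(p.1.1 : ℂ) - (p.1.2 : ℂ)‖ ^ α)) ⟨(⟨z, hz⟩, ⟨z', hz'⟩), hne⟩
  have hle := ENNReal.toReal_mono h hle
  rw [ENNReal.toReal_div, ENNReal.toReal_ofReal hpos.le, div_le_iff₀ hpos] at hle
  simpa using hle

lemma supNormC_mono (h : S ⊆ T) (f : ℂ → ℝ) : supNormC S f ≤ supNormC T f :=
  iSup_le fun z => le_iSup (fun z : T => (‖f (z : ℂ)‖₊ : ℝ≥0∞)) ⟨z, h z.2⟩

lemma supNormC_le_ofReal (h : ∀ z ∈ S, |f z| ≤ A) : supNormC S f ≤ ENNReal.ofReal A := by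
  refine iSup_le fun z => ?_
  rw [← enorm_eq_nnnorm, Real.enorm_eq_ofReal_abs]
  exact ENNReal.ofReal_le_ofReal (h z z.2)

lemma holderSemiC_le_ofReal (hB : 0 ≤ B)
    (h : ∀ z ∈ S, ∀ z' ∈ S, |g z - g z'| ≤ B * ‖z - z'‖ ^ α) :
    holderSemiC α S g ≤ ENNReal.ofReal B := by
  refine iSup_le fun p => ENNReal.div_le_of_le_mul ?_
  rw [← ENNReal.ofReal_mul hB, ← enorm_eq_nnnorm, Real.enorm_eq_ofReal_abs]
  exact ENNReal.ofReal_le_ofReal (h _ p.1.1.2 _ p.1.2.2)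

lemma ringNormC_eq_add_holderSemiC (α : ℝ) (S : Set ℂ) (f : ℂ → ℝ) :
    ringNormC α S f = supNormC S f + holderSemiC α S fun z => ‖z‖ ^ α * f z := rfl

lemma supNormC_le_ringNormC (h : S ⊆ T) (α : ℝ) (f : ℂ → ℝ) : supNormC S f ≤ ringNormC α T f :=
  (supNormC_mono h f).trans le_self_add

lemma relativeHolderOn_toReal_ringNormC (hα0 : 0 ≤ α) (hα1 : α ≤ 1) (h : ringNormC α S f ≠ ⊤) :
    RelativeHolderOn f (ringNormC α S f).toReal α S := by
  intro z hz z' hz'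
  rw [ringNormC_eq_add_holderSemiC] at h ⊢
  obtain ⟨hsup, hsemi⟩ := ENNReal.add_ne_top.1 h
  rw [ENNReal.toReal_add hsup hsemi]
  calc ‖z‖ ^ α * |f z - f z'| = |‖z‖ ^ α * f z - ‖z‖ ^ α * f z'| := by
        rw [← mul_sub, abs_mul, abs_of_nonneg (by positivity : 0 ≤ ‖z‖ ^ α)]
    _ = |‖z‖ ^ α * f z - ‖z'‖ ^ α * f z' - f z' * (‖z‖ ^ α - ‖z'‖ ^ α)| := by ring_nf
    _ ≤ |‖z‖ ^ α * f z - ‖z'‖ ^ α * f z'| + |f z'| * |‖z‖ ^ α - ‖z'‖ ^ α| := by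
      rw [← abs_mul]
      exact abs_sub _ _
    _ ≤ (holderSemiC α S fun z => ‖z‖ ^ α * f z).toReal * ‖z - z'‖ ^ α +
        (supNormC S f).toReal * ‖z - z'‖ ^ α := by
      gcongr
      · exact abs_sub_le_toReal_holderSemiC hsemi hz hz'
      · exact abs_le_toReal_supNormC hsup hz'
      · exact abs_rpow_norm_sub_le hα0 hα1 z z'
    _ = _ := by ring

lemma RelativeHolderOn.ringNormC_le (h : RelativeHolderOn f B α S) (hα0 : 0 ≤ α) (hα1 : α ≤ 1)
    (hA : 0 ≤ A) (hB : 0 ≤ B) (hf : ∀ z ∈ S, |f z| ≤ A) :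
    ringNormC α S f ≤ ENNReal.ofReal (A + (B + A)) := by
  rw [ENNReal.ofReal_add hA (by positivity), ringNormC_eq_add_holderSemiC]
  refine add_le_add (supNormC_le_ofReal hf)
    (holderSemiC_le_ofReal (by positivity) fun z hz z' hz' => ?_)
  calc |‖z‖ ^ α * f z - ‖z'‖ ^ α * f z'|
      = |‖z‖ ^ α * (f z - f z') + f z' * (‖z‖ ^ α - ‖z'‖ ^ α)| := by ring_nf
    _ ≤ ‖z‖ ^ α * |f z - f z'| + |f z'| * |‖z‖ ^ α - ‖z'‖ ^ α| := by
      refine (abs_add_le _ _).trans_eq ?_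
      rw [abs_mul, abs_mul, abs_of_nonneg (by positivity : 0 ≤ ‖z‖ ^ α)]
    _ ≤ B * ‖z - z'‖ ^ α + A * ‖z - z'‖ ^ α :=
      add_le_add (h z hz z' hz')
        (mul_le_mul (hf z' hz') (abs_rpow_norm_sub_le hα0 hα1 z z') (abs_nonneg _) hA)
    _ = (B + A) * ‖z - z'‖ ^ α := by ring

lemma sq_mul_log_isLittleO_rpow (hγ : 2 < γ) :
    (fun t : ℝ => t ^ 2 * Real.log (Real.exp 1 + t)) =o[atTop] fun t => t ^ γ := by
  have hadd : (fun t : ℝ => Real.exp 1 + t) =O[atTop] fun t => t :=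
    (isLittleO_const_id_atTop _).isBigO.add (isBigO_refl _ _)
  have hlog : (fun t : ℝ => Real.log (Real.exp 1 + t)) =o[atTop] fun t => t ^ (γ - 2) :=
    ((isLittleO_log_rpow_atTop (sub_pos.2 hγ)).comp_tendsto
      (tendsto_atTop_add_const_left _ _ tendsto_id)).trans_isBigO
      (hadd.rpow (sub_pos.2 hγ).le (eventually_ge_atTop 0))
  refine ((isBigO_refl (fun t : ℝ => t ^ 2) atTop).mul_isLittleO hlog).congr' .rfl ?_
  filter_upwards [eventually_gt_atTop 0] with t ht
  rw [← Real.rpow_natCast, ← Real.rpow_add ht, Nat.cast_ofNat, add_sub_cancel]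

lemma isLittleO_rpow_of_abs_le_sq_mul_log (hγ : 2 < γ)
    (h : ∀ z ∈ S, |u z| ≤ C₀ * ‖z‖ ^ 2 * Real.log (Real.exp 1 + ‖z‖)) :
    u =o[Bornology.cobounded ℂ ⊓ 𝓟 S] fun w => ‖w‖ ^ γ := by
  refine IsBigO.trans_isLittleO (.of_bound |C₀| ?_)
    (((sq_mul_log_isLittleO_rpow hγ).comp_tendsto tendsto_norm_cobounded_atTop).mono inf_le_left)
  filter_upwards [mem_inf_of_right (mem_principal_self S)] with z hz
  refine (h z hz).trans ?_
  rw [Function.comp_apply, Real.norm_eq_abs, ← abs_mul, ← mul_assoc]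
  exact le_abs_self _

lemma IsSectorSolution.isHolderSectorSolution (h : IsSectorSolution β u f) (hβ0 : 0 < β)
    (hβ : β < 1 / 2) (hα0 : 0 ≤ α) (hα1 : α ≤ 1) (hγ : 0 < γ) (hγβ : γ * β < 1)
    (hgrowth : u =o[Bornology.cobounded ℂ ⊓ 𝓟 (Sector β)] fun w => ‖w‖ ^ γ)
    (hf : ringNormC α (closure (Sector β)) f ≠ ⊤) (hM : (supNormC (Sector β) f).toReal ≤ M) :
    IsHolderSectorSolution α β ((2 * Real.cos (β * π))⁻¹ * M) M
      (ringNormC α (closure (Sector β)) f).toReal u f :=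
  have hsup : supNormC (Sector β) f ≠ ⊤ :=
    ne_top_of_le_ne_top hf (supNormC_le_ringNormC subset_closure α f)
  have hfM : ∀ z ∈ Sector β, |f z| ≤ M := fun _ hz => (abs_le_toReal_supNormC hsup hz).trans hM
  ⟨h, fun _ => h.abs_le_mul_sq_norm hβ0 hβ hγ hγβ hgrowth (ENNReal.toReal_nonneg.trans hM) hfM,
    hfM, (relativeHolderOn_toReal_ringNormC hα0 hα1 hf).mono subset_closure⟩

lemma exists_two_lt_mul_lt_one (hβ0 : 0 < β) (hβ : β < 1 / 2) : ∃ γ : ℝ, 2 < γ ∧ γ * β < 1 := by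
  obtain ⟨γ, hγ, hγβ⟩ := exists_between ((lt_div_iff₀ hβ0).2 (by linarith) : 2 < 1 / β)
  exact ⟨γ, hγ, (lt_div_iff₀ hβ0).1 hγβ⟩

end Norms

theorem sector_ring_holder_estimate_general (β α : ℝ) (hβ0 : 0 < β) (hβ : β < 1 / 2)
    (hα0 : 0 < α) (hα1 : α < 1) :
    ∃ C : ℝ, 0 < C ∧ ∀ γ : ℝ, 0 < γ → γ * β < 1 → ∀ f Ψ : ℂ → ℝ,
      ringNormC α (closure (Sector β)) f < ⊤ →
      ContinuousOn Ψ (closure (Sector β)) →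
      ContDiffOn ℝ 2 Ψ (Sector β) →
      (∀ z ∈ Sector β, lap Ψ z = f z) →
      (∀ z ∈ frontier (Sector β), Ψ z = 0) →
      Ψ =o[Bornology.cobounded ℂ ⊓ 𝓟 (Sector β)] (fun z => ‖z‖ ^ γ) →
      ∀ v₁ v₂ : ℂ, ‖v₁‖ = 1 → ‖v₂‖ = 1 →
        (∀ z ∈ Sector β,
          |hess Ψ v₁ v₂ z| ≤
            C * (supNormC (Sector β) f).toReal *
              (1 + Real.log (1 + (ringNormC α (closure (Sector β)) f).toReal /
                (supNormC (Sector β) f).toReal))) ∧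
        ringNormC α (Sector β) (hess Ψ v₁ v₂) ≤
          ENNReal.ofReal C * ringNormC α (closure (Sector β)) f := by
  have hK : 0 ≤ (2 * Real.cos (β * π))⁻¹ := by
    have := cos_mul_pi_pos hβ0 hβ
    positivity
  obtain ⟨C₁, hC₁, hlog⟩ := exists_abs_hess_le_log hβ0 hβ.le hα0 hK
  obtain ⟨C₂, hC₂, hholder⟩ := exists_relativeHolderOn_hess hβ0 hβ.le hα0 hα1 hK
  refine ⟨C₁ + 3 * C₂, by positivity, ?_⟩
  intro γ hγ hγβ f Ψ hfin hcont hsmooth hlap hbdry hgrowth v₁ v₂ hv₁ hv₂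
  have hMN := ENNReal.toReal_mono hfin.ne
    (supNormC_le_ringNormC (subset_closure (s := Sector β)) α f)
  have hsol {M : ℝ} (hM : (supNormC (Sector β) f).toReal ≤ M) :=
    IsSectorSolution.isHolderSectorSolution ⟨hcont, hsmooth, hlap, hbdry⟩ hβ0 hβ hα0.le hα1.le
      hγ hγβ hgrowth hfin.ne hM
  have hM : 0 ≤ (supNormC (Sector β) f).toReal := ENNReal.toReal_nonneg
  set M := (supNormC (Sector β) f).toReal
  set N := (ringNormC α (closure (Sector β)) f).toReal with hN_def
  have hN : 0 ≤ N := hM.trans hMN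
  constructor
  · intro z hz
    refine (hlog hM hMN (hsol le_rfl) hv₁ hv₂ z hz).trans ?_
    have hL : 0 ≤ Real.log (1 + N / M) :=
      Real.log_nonneg (le_add_of_nonneg_right (div_nonneg hN hM))
    gcongr
    linarith
  · obtain ⟨hb, hh⟩ := hholder hN (hsol hMN) hv₁ hv₂
    refine (hh.ringNormC_le hα0.le hα1.le (by positivity) (by positivity) hb).trans ?_
    rw [← ENNReal.ofReal_toReal hfin.ne, ← ENNReal.ofReal_mul (by positivity), ← hN_def]
    exact ENNReal.ofReal_le_ofReal (by nlinarith [mul_nonneg hC₁.le hN])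

end

/-- **Scale-invariant Hölder estimate for the Dirichlet Laplacian on a sector
(Lemma 3.6).** For `0 < β < 1/2`, `0 < α < 1`, there are constants `C, c > 0` depending only
on `α, β` such that for every `f` with `0 < ‖f‖_{∘C^α(Ω̄_β)} < ∞` and the unique `Ψ` with
`ΔΨ = f` in `Ω_β`, `Ψ = 0` on `∂Ω_β` and `|Ψ(x)| ≤ C₀ |x|² ln(e+|x|)`:
(i) `‖∇²Ψ‖_{L^∞} ≤ C ‖f‖_{L^∞} (1 + ln(1 + c ‖f‖_{∘C^α}/‖f‖_{L^∞}))`, and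
(ii) `‖∇²Ψ‖_{∘C^α(Ω̄_β)} ≤ C ‖f‖_{∘C^α(Ω̄_β)}`. -/
theorem sector_ring_holder_estimate (β α : ℝ) (hβ0 : 0 < β) (hβ : β < 1/2)
    (hα0 : 0 < α) (hα1 : α < 1) :
    ∃ C c : ℝ, 0 < C ∧ 0 < c ∧
      ∀ (f Ψ : ℂ → ℝ),
      0 < ringNormC α (closure (Sector β)) f →
      ringNormC α (closure (Sector β)) f < ⊤ →
      ContinuousOn Ψ (closure (Sector β)) →
      ContDiffOn ℝ 2 Ψ (Sector β) →
      (∀ z ∈ Sector β, lap Ψ z = f z) →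
      (∀ z ∈ frontier (Sector β), Ψ z = 0) →
      (∃ C₀ : ℝ, ∀ z ∈ Sector β, |Ψ z| ≤ C₀ * ‖z‖ ^ 2 * Real.log (Real.exp 1 + ‖z‖)) →
      ∀ v₁ ∈ ({1, Complex.I} : Set ℂ), ∀ v₂ ∈ ({1, Complex.I} : Set ℂ),
        (∀ z ∈ Sector β,
          |hess Ψ v₁ v₂ z| ≤
            C * (supNormC (Sector β) f).toReal *
              (1 + Real.log (1 + c * (ringNormC α (closure (Sector β)) f).toReal /
                (supNormC (Sector β) f).toReal))) ∧
        ringNormC α (Sector β) (hess Ψ v₁ v₂) ≤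
          ENNReal.ofReal C * ringNormC α (closure (Sector β)) f := by
  obtain ⟨C, hC, h⟩ := sector_ring_holder_estimate_general β α hβ0 hβ hα0 hα1
  obtain ⟨γ, hγ, hγβ⟩ := exists_two_lt_mul_lt_one hβ0 hβ
  refine ⟨C, 1, hC, one_pos, ?_⟩
  intro f Ψ _ hfin hcont hsmooth hlap hbdry ⟨C₀, hgrowth⟩ v₁ hv₁ v₂ hv₂
  have hnorm : ∀ v ∈ ({1, Complex.I} : Set ℂ), ‖v‖ = 1 := by simp
  simpa only [one_mul] using h γ (two_pos.trans hγ) hγβ f Ψ hfin hcont hsmooth hlap hbdry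
    (isLittleO_rpow_of_abs_le_sq_mul_log hγ hgrowth) v₁ v₂ (hnorm v₁ hv₁) (hnorm v₂ hv₂)
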